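/- arXiv:1807.08675 — 7 statements merged into one kernel-verified Lean document; each statement's English description precedes it below -/
import Mathlib

section
/- Suppose n = 1 and the tail of the affine equation consists of the single term b x_{i−1}^{q^k}, where 1 ≤ k < r and b ≠ 0, and assume a_r = 1. Set α_γ = ord(a_γ) for those γ with a_γ ≠ 0 and β = ord(b). Let j ∈ {1, ..., r} with a_j ≠ 0 be such that (α_0 − α_i)/(q^i − 1) ≤ (α_0 − α_j)/(q^j − 1) for every i ∈ {1, ..., r} with a_i ≠ 0, with strict inequality for every such i > j (i.e., q^j is the x-coordinate of the right end of the leftmost segment of the Newton polygon of the head). Then (α_0 − α_j)/(q^j − 1) ≤ (α_0 − β)/(q^k − 1) holds if and only if the only small solution of the equation is the zero solution. (Proposition 2.12) -/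
/-!
Write `A z = ∑ a_γ z^{q^γ}` for the head, `lam = (α_0 - α_j)/(q^j - 1)` for the largest valuation of
a nonzero root of `A`, and `mu = (α_0 - β)/(q^k - 1)` for the fixed point of the affine map
`s ↦ q^k s + β - α_0`. The recursion reads `A (x_{i+1}) = -b x_i^{q^k}`, `A (x_0) = 0`.

* If `ord z > lam`, the linear term of `A z` dominates, so `ord (A z) = α_0 + ord z`
  (`val_head_eq`). When `lam ≤ mu`, this makes `ord x_{i+1} > mu` force `ord x_i > mu`
  (`val_gt_of_val_succ_gt`). A small solution thus satisfies `ord x_i > mu ≥ lam` for all `i`, and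
  since `A` has no nonzero zero in this region, `x_i = 0` follows by induction on `i`.
* If `mu < lam`, choose a root `x_0 ≠ 0` of `A` with `ord x_0 ≥ lam`, and then successively `x_{i+1}`
  with `A (x_{i+1}) = -b x_i^{q^k}` and `α_0 + ord x_{i+1} ≥ β + q^k ord x_i`. Then
  `ord x_i - mu ≥ q^{ki} (lam - mu)` tends to infinity. Both choices come from `exists_root_le_val`,
  the part of the Newton polygon theorem that is needed: a polynomial all of whose roots have
  valuation less than `t` satisfies `ord c_m > ord c_0 - m t` for `m ≥ 1`.
-/

/-- Extension of a sequence by zero to negative indices (convention `x_j = 0` for `j < 0`). -/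
def extSeq {K : Type*} [Zero K] (x : ℕ → K) : ℤ → K :=
  fun j => if 0 ≤ j then x j.toNat else 0

/-- A solution of the affine equation whose tail consists of the single term
`b * x_{i-1}^{q^k}`. -/
def IsSolutionSingleTail {K : Type*} [Field K] (q r k : ℕ) (a : ℕ → K) (b : K)
    (x : ℕ → K) : Prop :=
  ∀ i : ℕ,
    (∑ γ ∈ Finset.range (r + 1), a γ * x i ^ q ^ γ) +
      b * extSeq x ((i : ℤ) - 1) ^ q ^ k = 0

/-- A sequence is small if its valuations tend to `+∞`. -/
def SmallSeq {K : Type*} [Field K] (ord : K → WithTop ℚ) (x : ℕ → K) : Prop :=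
  ∀ C : ℚ, ∃ N : ℕ, ∀ i ≥ N, (C : WithTop ℚ) ≤ ord (x i)

/-! ### Newton polygons and valuations of roots -/

open Polynomial in
/-- If all roots of a split polynomial have valuation less than `t`, the Newton polygon lies strictly
above the line of slope `-t` through its left end point, except at that point. -/
lemma newton_bound {K : Type*} [Field K] (v : AddValuation K (WithTop ℚ)) (t : ℚ) (c : K)
    (hc : c ≠ 0) (s : Multiset K) :
    (∀ z ∈ s, v z < (t : WithTop ℚ)) →
      ∃ u : ℚ, v ((C c * (s.map (fun z => X - C z)).prod).coeff 0) = (u : WithTop ℚ) ∧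
        ∀ m : ℕ, 1 ≤ m → ((u - m * t : ℚ) : WithTop ℚ) <
          v ((C c * (s.map (fun z => X - C z)).prod).coeff m) := by
  induction s using Multiset.induction_on with
  | empty =>
    intro _
    obtain ⟨u, hu⟩ := WithTop.ne_top_iff_exists.mp (show v c ≠ ⊤ by simpa using hc)
    refine ⟨u, by simp [hu], fun m hm => ?_⟩
    have : (C c : K[X]).coeff m = 0 := coeff_C_of_ne_zero (by omega)
    rw [Multiset.map_zero, Multiset.prod_zero, mul_one, this, v.map_zero]
    exact WithTop.coe_lt_top _
  | cons z s ih =>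
    intro h
    obtain ⟨u, hu0, hu⟩ := ih (fun y hy => h y (Multiset.mem_cons_of_mem hy))
    have hz := h z (Multiset.mem_cons_self z s)
    set P : K[X] := C c * (s.map (fun z => X - C z)).prod with hP
    have hmul : C c * ((z ::ₘ s).map (fun z => X - C z)).prod = P * X - P * C z := by
      rw [Multiset.map_cons, Multiset.prod_cons, hP]; ring
    rw [hmul]
    obtain ⟨d, hd⟩ := WithTop.ne_top_iff_exists.mp (ne_top_of_lt hz)
    rw [← hd] at hz
    have hdt : d < t := by exact_mod_cast hz
    refine ⟨u + d, ?_, ?_⟩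
    · simp [hu0, ← hd]
    · intro m hm
      obtain ⟨m, rfl⟩ : ∃ n, m = n + 1 := ⟨m - 1, by omega⟩
      rw [coeff_sub, coeff_mul_X, coeff_mul_C]
      refine lt_of_lt_of_le (lt_min ?_ ?_) (v.map_sub _ _)
      · rcases Nat.eq_zero_or_pos m with rfl | hm0
        · rw [hu0]
          norm_cast
          push_cast; linarith
        · refine lt_of_le_of_lt ?_ (hu m hm0)
          norm_cast
          push_cast; linarith
      · rw [v.map_mul, ← hd]
        have := hu (m + 1) hm
        generalize v (P.coeff (m + 1)) = y at this
        cases y with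
        | top => exact WithTop.coe_lt_top _
        | coe y =>
          norm_cast at this ⊢
          linarith

open Polynomial in
/-- Contrapositive of `newton_bound`: a coefficient `c_m` on or below the line of slope `-t` forces a
root of valuation at least `t`. -/
lemma exists_root_le_val {K : Type*} [Field K] [IsAlgClosed K] (v : AddValuation K (WithTop ℚ))
    (P : K[X]) (h0 : P.coeff 0 ≠ 0) (m : ℕ) (hm : 1 ≤ m) (t c0 cm : ℚ)
    (hc0 : v (P.coeff 0) = (c0 : WithTop ℚ)) (hcm : v (P.coeff m) = (cm : WithTop ℚ))
    (h : cm + m * t ≤ c0) : ∃ z : K, P.eval z = 0 ∧ (t : WithTop ℚ) ≤ v z := by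
  by_contra! hcon
  have hP : P ≠ 0 := by rintro rfl; simp at h0
  have hfac := (IsAlgClosed.splits P).eq_prod_roots
  obtain ⟨u, hu0, hu⟩ := newton_bound v t P.leadingCoeff (leadingCoeff_ne_zero.mpr hP) P.roots
    (fun z hz => hcon z (by simpa [hP] using hz))
  rw [← hfac] at hu0 hu
  have h1 := hu m hm
  rw [hc0] at hu0
  rw [hcm] at h1
  norm_cast at h1 hu0
  linarith

/-! ### The region where the linear term dominates -/

/-- Beyond the largest slope `lam`, the linear term of the head strictly dominates. -/
lemma val_head_eq {K : Type*} [Field K] (v : AddValuation K (WithTop ℚ)) (q r : ℕ) (hq : 2 ≤ q)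
    (a : ℕ → K) (α : ℕ → ℚ) (ha0 : a 0 ≠ 0)
    (hα : ∀ γ : ℕ, a γ ≠ 0 → v (a γ) = (α γ : WithTop ℚ)) (lam : ℚ)
    (hmax : ∀ i : ℕ, 1 ≤ i → i ≤ r → a i ≠ 0 → (α 0 - α i) / ((q : ℚ) ^ i - 1) ≤ lam)
    (z : K) (s : ℚ) (hz : v z = (s : WithTop ℚ)) (hs : lam < s) :
    v (∑ γ ∈ Finset.range (r + 1), a γ * z ^ q ^ γ) = ((α 0 + s : ℚ) : WithTop ℚ) := by
  rw [Finset.sum_range_succ']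
  have h0 : v (a 0 * z ^ q ^ 0) = ((α 0 + s : ℚ) : WithTop ℚ) := by
    simp [hα 0 ha0, hz]
  rw [← h0]
  refine AddValuation.map_add_eq_of_lt_right v ?_
  rw [h0]
  refine v.map_lt_sum (by simp) ?_
  intro i hi
  rw [Finset.mem_range] at hi
  by_cases hai : a (i + 1) = 0
  · simp [hai]
  · have h1 := hmax (i + 1) (by omega) (by omega) hai
    have hq1 : (1 : ℚ) < (q : ℚ) ^ (i + 1) :=
      one_lt_pow₀ (by exact_mod_cast hq) (by omega)
    have h2 := lt_of_le_of_lt h1 hs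
    rw [div_lt_iff₀ (by linarith)] at h2
    rw [v.map_mul, v.map_pow, hα _ hai, hz]
    have h3 : (q ^ (i + 1)) • (s : WithTop ℚ) = (((q ^ (i + 1) : ℕ) * s : ℚ) : WithTop ℚ) := by
      rw [← WithTop.coe_nsmul, nsmul_eq_mul]
    rw [h3]
    norm_cast
    push_cast
    linarith

/-- For a solution, when `lam ≤ mu`, being above the fixed point `mu` propagates backwards. -/
lemma val_gt_of_val_succ_gt {K : Type*} [Field K] (v : AddValuation K (WithTop ℚ)) (q r k : ℕ)
    (hq : 2 ≤ q) (hk : 1 ≤ k)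
    (a : ℕ → K) (α : ℕ → ℚ) (ha0 : a 0 ≠ 0) (b : K) (hb : b ≠ 0) (β : ℚ)
    (hβ : v b = (β : WithTop ℚ))
    (hα : ∀ γ : ℕ, a γ ≠ 0 → v (a γ) = (α γ : WithTop ℚ)) (lam : ℚ)
    (hmax : ∀ i : ℕ, 1 ≤ i → i ≤ r → a i ≠ 0 → (α 0 - α i) / ((q : ℚ) ^ i - 1) ≤ lam)
    (hle : lam ≤ (α 0 - β) / ((q : ℚ) ^ k - 1)) (y z : K)
    (hyz : (∑ γ ∈ Finset.range (r + 1), a γ * z ^ q ^ γ) + b * y ^ q ^ k = 0)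
    (hz : (((α 0 - β) / ((q : ℚ) ^ k - 1) : ℚ) : WithTop ℚ) < v z) :
    (((α 0 - β) / ((q : ℚ) ^ k - 1) : ℚ) : WithTop ℚ) < v y := by
  by_cases hy : y = 0
  · simp [hy]
  have hq0 : q ≠ 0 := by omega
  have hz0 : z ≠ 0 := by
    rintro rfl
    simp [hq0, hb, hy] at hyz
  obtain ⟨s, hs⟩ := WithTop.ne_top_iff_exists.mp (show v z ≠ ⊤ by simpa using hz0)
  obtain ⟨t, ht⟩ := WithTop.ne_top_iff_exists.mp (show v y ≠ ⊤ by simpa using hy)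
  rw [← hs] at hz
  rw [← ht]
  have hz' := WithTop.coe_lt_coe.mp hz
  rw [WithTop.coe_lt_coe]
  have h1 := val_head_eq v q r hq a α ha0 hα lam hmax z s hs.symm (lt_of_le_of_lt hle hz')
  rw [eq_neg_of_add_eq_zero_left hyz, v.map_neg, v.map_mul, v.map_pow, hβ, ← ht,
    ← WithTop.coe_nsmul, nsmul_eq_mul] at h1
  norm_cast at h1
  push_cast at h1
  have hq1 : (1 : ℚ) < (q : ℚ) ^ k := one_lt_pow₀ (by exact_mod_cast hq) (by omega)
  rw [div_lt_iff₀ (by linarith)] at hz' ⊢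
  nlinarith

/-! ### Roots and preimages of the head -/

open Polynomial in
/-- The head, viewed as a polynomial in `X`. -/
noncomputable def headPoly {K : Type*} [Field K] (q r : ℕ) (a : ℕ → K) : K[X] :=
  ∑ γ ∈ Finset.range (r + 1), C (a γ) * X ^ q ^ γ

lemma headPoly_eval {K : Type*} [Field K] (q r : ℕ) (a : ℕ → K) (z : K) :
    (headPoly q r a).eval z = ∑ γ ∈ Finset.range (r + 1), a γ * z ^ q ^ γ := by
  simp [headPoly, Polynomial.eval_finsetSum]

lemma headPoly_coeff {K : Type*} [Field K] (q r : ℕ) (hq : 2 ≤ q) (a : ℕ → K) (j : ℕ)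
    (hj : j ≤ r) : (headPoly q r a).coeff (q ^ j) = a j := by
  simp only [headPoly, Polynomial.finsetSum_coeff, Polynomial.coeff_C_mul, Polynomial.coeff_X_pow]
  rw [Finset.sum_eq_single j]
  · simp
  · intro i _ hij
    rw [if_neg, mul_zero]
    exact fun h => hij (Nat.pow_right_injective hq h).symm
  · intro h
    exact absurd (Finset.mem_range.mpr (by omega)) h

lemma headPoly_coeff_zero {K : Type*} [Field K] (q r : ℕ) (hq : 2 ≤ q) (a : ℕ → K) :
    (headPoly q r a).coeff 0 = 0 := by
  have hq0 : q ≠ 0 := by omega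
  rw [Polynomial.coeff_zero_eq_eval_zero, headPoly_eval]
  simp [hq0]

/-- The head has a nonzero root of valuation at least the slope from `0` to `j`. -/
lemma exists_head_root {K : Type*} [Field K] [IsAlgClosed K] (v : AddValuation K (WithTop ℚ))
    (q r : ℕ) (hq : 2 ≤ q) (a : ℕ → K) (α : ℕ → ℚ) (ha0 : a 0 ≠ 0)
    (hα : ∀ γ : ℕ, a γ ≠ 0 → v (a γ) = (α γ : WithTop ℚ)) (j : ℕ) (hj1 : 1 ≤ j) (hjr : j ≤ r)
    (haj : a j ≠ 0) :
    ∃ z : K, z ≠ 0 ∧ ∑ γ ∈ Finset.range (r + 1), a γ * z ^ q ^ γ = 0 ∧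
      (((α 0 - α j) / ((q : ℚ) ^ j - 1) : ℚ) : WithTop ℚ) ≤ v z := by
  have hq1 : 1 < q ^ j := Nat.one_lt_pow (by omega) (by omega)
  have hq1' : (1 : ℚ) < (q : ℚ) ^ j := by exact_mod_cast hq1
  -- The root `0` is removed by passing to `A(X)/X`, whose coefficient of `X^{q^j - 1}` is `a_j`.
  have c0 : (headPoly q r a).divX.coeff 0 = a 0 := by
    rw [Polynomial.coeff_divX, ← headPoly_coeff q r hq a 0 (by omega)]; simp
  have cj : (headPoly q r a).divX.coeff (q ^ j - 1) = a j := by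
    rw [Polynomial.coeff_divX, Nat.sub_add_cancel hq1.le, headPoly_coeff q r hq a j hjr]
  obtain ⟨z, hz, hv⟩ := exists_root_le_val v (headPoly q r a).divX (by rwa [c0]) (q ^ j - 1)
    (by omega) ((α 0 - α j) / ((q : ℚ) ^ j - 1)) (α 0) (α j) (by rw [c0, hα 0 ha0])
    (by rw [cj, hα j haj]) (by
      push_cast [Nat.cast_sub hq1.le]
      rw [mul_div_cancel₀ _ (by linarith : (q : ℚ) ^ j - 1 ≠ 0)]
      linarith)
  refine ⟨z, ?_, ?_, hv⟩
  · rintro rfl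
    rw [← Polynomial.coeff_zero_eq_eval_zero, c0] at hz
    exact ha0 hz
  · rw [← headPoly_eval, ← Polynomial.divX_mul_X_add (headPoly q r a)]
    simp [hz, headPoly_coeff_zero q r hq a]

/-- The head admits preimages that are as small as its linear term allows. -/
lemma exists_head_preimage {K : Type*} [Field K] [IsAlgClosed K] (v : AddValuation K (WithTop ℚ))
    (q r : ℕ) (hq : 2 ≤ q) (a : ℕ → K) (α₀ : ℚ) (hα : v (a 0) = (α₀ : WithTop ℚ)) (w : K) :
    ∃ z : K, ∑ γ ∈ Finset.range (r + 1), a γ * z ^ q ^ γ = w ∧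
      v w ≤ (α₀ : WithTop ℚ) + v z := by
  by_cases hw : w = 0
  · refine ⟨0, ?_, by simp⟩
    have hq0 : q ≠ 0 := by omega
    simp [hw, hq0]
  obtain ⟨s, hs⟩ := WithTop.ne_top_iff_exists.mp (show v w ≠ ⊤ by simpa using hw)
  have c0 : (headPoly q r a - Polynomial.C w).coeff 0 = -w := by
    simp [headPoly_coeff_zero q r hq a]
  have c1 : (headPoly q r a - Polynomial.C w).coeff 1 = a 0 := by
    have := headPoly_coeff q r hq a 0 (by omega)
    rw [pow_zero] at this
    simp [this]
  obtain ⟨z, hz, hv⟩ := exists_root_le_val v (headPoly q r a - Polynomial.C w)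
    (by rw [c0]; exact neg_ne_zero.mpr hw) 1 le_rfl (s - α₀) s α₀ (by rw [c0, v.map_neg, hs])
    (by rw [c1, hα]) (by push_cast; linarith)
  refine ⟨z, ?_, ?_⟩
  · rw [← headPoly_eval]
    simpa [sub_eq_zero] using hz
  · rw [← hs]
    calc (s : WithTop ℚ) = (α₀ : WithTop ℚ) + ((s - α₀ : ℚ) : WithTop ℚ) := by
          norm_cast; ring
      _ ≤ _ := by gcongr

lemma extSeq_succ {K : Type*} [Zero K] (x : ℕ → K) (i : ℕ) :
    extSeq x (((i + 1 : ℕ) : ℤ) - 1) = x i := by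
  simp [extSeq]

lemma extSeq_zero {K : Type*} [Zero K] (x : ℕ → K) :
    extSeq x (((0 : ℕ) : ℤ) - 1) = 0 := by
  simp [extSeq]

/-! ### Small solutions -/

/-- Proposition 2.12. -/
theorem dimension_zero_iff_newton_inequality
    {p : ℕ} (hp : p.Prime) {e : ℕ} (he : 1 ≤ e) {q : ℕ} (hq : q = p ^ e)
    {K : Type*} [Field K] [IsAlgClosed K] [CharP K p]
    (ord : K → WithTop ℚ)
    (hord_top : ∀ z : K, ord z = ⊤ ↔ z = 0)
    (hord_mul : ∀ z w : K, ord (z * w) = ord z + ord w)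
    (hord_add : ∀ z w : K, min (ord z) (ord w) ≤ ord (z + w))
    (hord_surj : Function.Surjective ord)
    {r : ℕ} (hr : 1 ≤ r) (a : ℕ → K) (ha0 : a 0 ≠ 0) (har : a r = 1)
    {k : ℕ} (hk1 : 1 ≤ k) (hkr : k < r) {b : K} (hb : b ≠ 0)
    (α : ℕ → ℚ) (hα : ∀ γ : ℕ, a γ ≠ 0 → ord (a γ) = (α γ : WithTop ℚ))
    (β : ℚ) (hβ : ord b = (β : WithTop ℚ))
    {j : ℕ} (hj1 : 1 ≤ j) (hjr : j ≤ r) (haj : a j ≠ 0)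
    (hjmax : ∀ i : ℕ, 1 ≤ i → i ≤ r → a i ≠ 0 →
      (α 0 - α i) / ((q : ℚ) ^ i - 1) ≤ (α 0 - α j) / ((q : ℚ) ^ j - 1))
    (hjstrict : ∀ i : ℕ, j < i → i ≤ r → a i ≠ 0 →
      (α 0 - α i) / ((q : ℚ) ^ i - 1) < (α 0 - α j) / ((q : ℚ) ^ j - 1)) :
    (α 0 - α j) / ((q : ℚ) ^ j - 1) ≤ (α 0 - β) / ((q : ℚ) ^ k - 1) ↔
      (∀ x : ℕ → K, IsSolutionSingleTail q r k a b x → SmallSeq ord x → ∀ i, x i = 0) := by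
  have hq2 : 2 ≤ q := by
    rw [hq]
    exact hp.two_le.trans (Nat.le_self_pow (by omega) p)
  have hq0 : q ≠ 0 := by omega
  have hone : ord 1 = 0 := by
    obtain ⟨u, hu⟩ := WithTop.ne_top_iff_exists.mp
      (show ord 1 ≠ ⊤ from fun h => one_ne_zero ((hord_top 1).mp h))
    have h := hord_mul 1 1
    rw [mul_one, ← hu] at h
    rw [← hu]
    norm_cast at h ⊢
    linarith
  let v : AddValuation K (WithTop ℚ) :=
    AddValuation.of ord ((hord_top 0).mpr rfl) hone hord_add hord_mul
  have hv : ∀ z, ord z = v z := fun z => rfl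
  have hvα : ∀ γ : ℕ, a γ ≠ 0 → v (a γ) = (α γ : WithTop ℚ) := hα
  have hvβ : v b = (β : WithTop ℚ) := hβ
  have hqk : (1 : ℚ) < (q : ℚ) ^ k := one_lt_pow₀ (by exact_mod_cast hq2) (by omega)
  constructor
  · intro hle x hx hsmall
    have hgt : ∀ i, (((α 0 - β) / ((q : ℚ) ^ k - 1) : ℚ) : WithTop ℚ) < v (x i) := by
      obtain ⟨N, hN⟩ := hsmall ((α 0 - β) / ((q : ℚ) ^ k - 1) + 1)
      have hstep : ∀ n i, N ≤ i + n →
          (((α 0 - β) / ((q : ℚ) ^ k - 1) : ℚ) : WithTop ℚ) < v (x i) := by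
        intro n
        induction n with
        | zero =>
          intro i hi
          refine lt_of_lt_of_le ?_ (hN i hi)
          rw [WithTop.coe_lt_coe]
          linarith
        | succ n ih =>
          intro i hi
          have h1 := hx (i + 1)
          rw [extSeq_succ] at h1
          exact val_gt_of_val_succ_gt v q r k hq2 hk1 a α ha0 b hb β hvβ hvα _ hjmax hle _ _ h1
            (ih (i + 1) (by omega))
      exact fun i => hstep N i (by omega)
    have hzero : ∀ i, ∑ γ ∈ Finset.range (r + 1), a γ * x i ^ q ^ γ = 0 → x i = 0 := by
      intro i h
      by_contra hxi
      obtain ⟨s, hs⟩ := WithTop.ne_top_iff_exists.mp (show v (x i) ≠ ⊤ by simpa using hxi)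
      have h1 := hgt i
      rw [← hs, WithTop.coe_lt_coe] at h1
      have h2 := val_head_eq v q r hq2 a α ha0 hvα _ hjmax (x i) s hs.symm (lt_of_le_of_lt hle h1)
      rw [h, v.map_zero] at h2
      exact WithTop.top_ne_coe h2
    intro i
    induction i with
    | zero =>
      have h1 := hx 0
      rw [extSeq_zero] at h1
      exact hzero 0 (by simpa [hq0] using h1)
    | succ i ih =>
      have h1 := hx (i + 1)
      rw [extSeq_succ, ih] at h1
      exact hzero (i + 1) (by simpa [hq0] using h1)
  · intro huniq
    by_contra! hlt
    obtain ⟨z₀, hz₀, hroot, hval⟩ := exists_head_root v q r hq2 a α ha0 hvα j hj1 hjr haj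
    choose f hf hfv using fun w => exists_head_preimage v q r hq2 a (α 0) (hvα 0 ha0) w
    let x : ℕ → K := fun n => Nat.rec z₀ (fun _ y => f (-(b * y ^ q ^ k))) n
    have hx1 : ∀ n, x (n + 1) = f (-(b * x n ^ q ^ k)) := fun n => rfl
    refine hz₀ (huniq x ?_ ?_ 0)
    · intro i
      cases i with
      | zero =>
        rw [extSeq_zero]
        simpa [hq0, x] using hroot
      | succ i =>
        rw [extSeq_succ, hx1, hf]
        ring
    · set mu : ℚ := (α 0 - β) / ((q : ℚ) ^ k - 1) with hmu
      set lam : ℚ := (α 0 - α j) / ((q : ℚ) ^ j - 1) with hlam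
      have hmu' : mu * ((q : ℚ) ^ k - 1) = α 0 - β := div_mul_cancel₀ _ (by linarith)
      have hgrow : ∀ n, ((mu + ((q : ℚ) ^ k) ^ n * (lam - mu) : ℚ) : WithTop ℚ) ≤ v (x n) := by
        intro n
        induction n with
        | zero => simpa [x] using hval
        | succ n ih =>
          have h1 := hfv (-(b * x n ^ q ^ k))
          rw [← hx1, v.map_neg, v.map_mul, v.map_pow, hvβ] at h1
          generalize v (x (n + 1)) = y' at h1
          generalize v (x n) = y at h1 ih
          cases y' with
          | top => simp
          | coe y' =>
            cases y with
            | top =>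
              have : (q ^ k) • (⊤ : WithTop ℚ) = ⊤ := by
                obtain ⟨m, hm⟩ : ∃ m, q ^ k = m + 1 :=
                  ⟨q ^ k - 1, by have := Nat.pos_of_ne_zero (pow_ne_zero k hq0); omega⟩
                rw [hm, succ_nsmul, WithTop.add_top]
              rw [this, WithTop.add_top, ← WithTop.coe_add, top_le_iff] at h1
              exact absurd h1 (WithTop.coe_ne_top)
            | coe y =>
              rw [← WithTop.coe_nsmul, nsmul_eq_mul] at h1
              rw [WithTop.coe_le_coe] at ih ⊢
              norm_cast at h1
              push_cast at h1
              have h2 := mul_le_mul_of_nonneg_left ih (by linarith : (0 : ℚ) ≤ (q : ℚ) ^ k)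
              rw [pow_succ]
              linarith
      intro c
      obtain ⟨N, hN⟩ := pow_unbounded_of_one_lt ((c - mu) / (lam - mu)) hqk
      refine ⟨N, fun i hi => le_trans ?_ (hgrow i)⟩
      rw [WithTop.coe_le_coe]
      have h1 : ((q : ℚ) ^ k) ^ N ≤ ((q : ℚ) ^ k) ^ i := pow_le_pow_right₀ hqk.le hi
      rw [div_lt_iff₀ (by linarith)] at hN
      have h2 := mul_le_mul_of_nonneg_right h1 (by linarith : (0 : ℚ) ≤ lam - mu)
      linarith
end

section
/- Let u, w ∈ K be the unique elements with u^2 = θ^{−1} and w^{16} = θ^{−29} (denoted θ^{−1/2} and θ^{−29/16}; they are unique since the Frobenius is bijective on K). Then every x ∈ K with ord(x) = 1/2 satisfying the head equation θ^{20}x^{16} + θ^{16}x^{8} + θ^{4}x^{4} + θ^{3}x^{2} + θ^{2}x = 0 satisfies ord(x − u − w) > 29/16. (Lemma 4.2) -/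
/-!
Write `x = u + y`. In characteristic 2 the head polynomial is additive in `x`, and
`u ^ 2 = θ⁻¹` makes its first two terms agree at `u`, as well as the next two. Hence

* `θ ^ 20 * x ^ 8 * y ^ 8 = θ ^ 20 * x ^ 16 + θ ^ 16 * x ^ 8`, which by the head equation is the
  sum of the three lower terms and so has valuation at least `-2`; as `ord x = 1 / 2` exactly,
  this forces `ord y ≥ 7 / 4`. This is where the roots close to `0` instead of `u` are excluded.
* `θ ^ 16 * w ^ 8 = θ ^ 2 * u`, so the equation for `y` reads
  `θ ^ 16 * (y + w) ^ 8 = θ ^ 20 * y ^ 16 + θ ^ 4 * y ^ 4 + θ ^ 3 * y ^ 2 + θ ^ 2 * y`, whose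
  right-hand side has valuation at least `-1 / 4`. Hence `ord (y + w) ≥ 63 / 32 > 29 / 16`.
-/

section Valuation

variable {K : Type*} [Field K] {ord : K → WithTop ℚ}

theorem ord_one_eq_zero (hord_top : ∀ z : K, ord z = ⊤ ↔ z = 0)
    (hord_mul : ∀ z w : K, ord (z * w) = ord z + ord w) : ord 1 = ((0 : ℚ) : WithTop ℚ) := by
  have hne : ord 1 ≠ ⊤ := fun h => one_ne_zero ((hord_top 1).1 h)
  obtain ⟨r, hr⟩ := WithTop.ne_top_iff_exists.1 hne
  have h := hord_mul 1 1
  rw [mul_one, ← hr, ← WithTop.coe_add, WithTop.coe_inj] at h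
  rw [← hr, WithTop.coe_inj]
  linarith

theorem ord_pow_eq (hord_top : ∀ z : K, ord z = ⊤ ↔ z = 0)
    (hord_mul : ∀ z w : K, ord (z * w) = ord z + ord w) {a : K} {r : ℚ}
    (ha : ord a = (r : WithTop ℚ)) (n : ℕ) : ord (a ^ n) = ((n * r : ℚ) : WithTop ℚ) := by
  induction n with
  | zero => simpa using ord_one_eq_zero hord_top hord_mul
  | succ k ih =>
    rw [pow_succ, hord_mul, ih, ha, ← WithTop.coe_add, WithTop.coe_inj]
    push_cast
    ring

theorem le_ord_pow (hord_top : ∀ z : K, ord z = ⊤ ↔ z = 0)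
    (hord_mul : ∀ z w : K, ord (z * w) = ord z + ord w) {a : K} {r : ℚ}
    (ha : (r : WithTop ℚ) ≤ ord a) (n : ℕ) : ((n * r : ℚ) : WithTop ℚ) ≤ ord (a ^ n) := by
  induction n with
  | zero => simpa using (ord_one_eq_zero hord_top hord_mul).ge
  | succ k ih =>
    have h : (((k + 1 : ℕ) * r : ℚ) : WithTop ℚ) = ((k * r : ℚ) : WithTop ℚ) + (r : WithTop ℚ) := by
      rw [← WithTop.coe_add, WithTop.coe_inj]
      push_cast
      ring
    rw [pow_succ, hord_mul, h]
    exact add_le_add ih ha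

/-- Lower bound for the valuation of a monomial `c ^ m * a ^ n`. -/
theorem le_ord_term (hord_top : ∀ z : K, ord z = ⊤ ↔ z = 0)
    (hord_mul : ∀ z w : K, ord (z * w) = ord z + ord w) {c a : K} {p r s : ℚ}
    (hc : ord c = (p : WithTop ℚ)) (ha : (r : WithTop ℚ) ≤ ord a) (m n : ℕ)
    (hs : s ≤ m * p + n * r) : (s : WithTop ℚ) ≤ ord (c ^ m * a ^ n) := by
  rw [hord_mul, ord_pow_eq hord_top hord_mul hc]
  calc (s : WithTop ℚ) ≤ ((m * p + n * r : ℚ) : WithTop ℚ) := WithTop.coe_le_coe.2 hs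
    _ = ((m * p : ℚ) : WithTop ℚ) + ((n * r : ℚ) : WithTop ℚ) := WithTop.coe_add _ _
    _ ≤ _ := by gcongr; exact le_ord_pow hord_top hord_mul ha n

/-- A lower bound for `ord (c * z ^ n)` with `ord c` finite bounds `ord z` from below. -/
theorem le_ord_of_le_ord_mul_pow (hord_top : ∀ z : K, ord z = ⊤ ↔ z = 0)
    (hord_mul : ∀ z w : K, ord (z * w) = ord z + ord w) {c z : K} {p q : ℚ} {n : ℕ} (hn : 0 < n)
    (hc : ord c = (p : WithTop ℚ))
    (h : ((p + n * q : ℚ) : WithTop ℚ) ≤ ord (c * z ^ n)) : (q : WithTop ℚ) ≤ ord z := by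
  by_contra! hlt
  obtain ⟨r, hr⟩ := WithTop.ne_top_iff_exists.1 hlt.ne_top
  rw [hord_mul, hc, ord_pow_eq hord_top hord_mul hr.symm, ← WithTop.coe_add,
    WithTop.coe_le_coe] at h
  rw [← hr, WithTop.coe_lt_coe] at hlt
  have hn' : (0 : ℚ) < n := by exact_mod_cast hn
  nlinarith

end Valuation

/-- Lemma 4.2: every root `x` of the head equation with `ord x = 1/2` satisfies
`ord (x - θ^{-1/2} - θ^{-29/16}) > 29/16`. -/
theorem head_root_expansion
    {K : Type*} [Field K] [IsAlgClosed K] [CharP K 2]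
    (ord : K → WithTop ℚ)
    (hord_top : ∀ z : K, ord z = ⊤ ↔ z = 0)
    (hord_mul : ∀ z w : K, ord (z * w) = ord z + ord w)
    (hord_add : ∀ z w : K, min (ord z) (ord w) ≤ ord (z + w))
    (hord_surj : Function.Surjective ord)
    (θ : K) (hθ : ord θ = ((-1 : ℚ) : WithTop ℚ))
    (u w : K) (hu : u ^ 2 = θ⁻¹) (hw : w ^ 16 = θ ^ (-29 : ℤ)) :
    ∀ x : K, ord x = ((1 / 2 : ℚ) : WithTop ℚ) →
      θ ^ 20 * x ^ 16 + θ ^ 16 * x ^ 8 + θ ^ 4 * x ^ 4 + θ ^ 3 * x ^ 2 + θ ^ 2 * x = 0 →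
      ((29 / 16 : ℚ) : WithTop ℚ) < ord (x - u - w) := by
  intro x hx hE
  have hadd : ∀ {q : WithTop ℚ} {a b : K}, q ≤ ord a → q ≤ ord b → q ≤ ord (a + b) :=
    fun ha hb => (le_min ha hb).trans (hord_add _ _)
  have hθ0 : θ ≠ 0 := by
    rintro rfl
    rw [(hord_top 0).2 rfl] at hθ
    exact WithTop.top_ne_coe hθ
  have h2 : (2 : K) = 0 := CharTwo.two_eq_zero
  have hu' : θ * u ^ 2 = 1 := by rw [hu, mul_inv_cancel₀ hθ0]
  have hw' : θ ^ 29 * w ^ 16 = 1 := by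
    rw [hw, ← zpow_natCast, ← zpow_add₀ hθ0]
    norm_num
  -- Both sides have square `θ ^ 3`, and squaring is injective in characteristic 2.
  have hwu : θ ^ 16 * w ^ 8 = θ ^ 2 * u := by
    apply CharTwo.sq_injective
    dsimp only
    linear_combination θ ^ 3 * hw' - θ ^ 3 * hu'
  obtain ⟨y, rfl⟩ : ∃ y, x = u + y := ⟨x - u, by ring⟩
  have hp2 : ∀ a b : K, (a + b) ^ 2 = a ^ 2 + b ^ 2 := CharTwo.add_sq
  have hp4 : ∀ a b : K, (a + b) ^ 4 = a ^ 4 + b ^ 4 := fun a b => by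
    linear_combination ((a + b) ^ 2 + a ^ 2 + b ^ 2) * hp2 a b + a ^ 2 * b ^ 2 * h2
  have hp8 : ∀ a b : K, (a + b) ^ 8 = a ^ 8 + b ^ 8 := fun a b => by
    linear_combination ((a + b) ^ 4 + a ^ 4 + b ^ 4) * hp4 a b + a ^ 4 * b ^ 4 * h2
  have hp16 : ∀ a b : K, (a + b) ^ 16 = a ^ 16 + b ^ 16 := fun a b => by
    linear_combination ((a + b) ^ 8 + a ^ 8 + b ^ 8) * hp8 a b + a ^ 8 * b ^ 8 * h2
  have hu4 : θ ^ 2 * u ^ 4 = 1 := by linear_combination (θ * u ^ 2 + 1) * hu'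
  have hu8 : θ ^ 4 * u ^ 8 = 1 := by linear_combination (θ ^ 2 * u ^ 4 + 1) * hu4
  have hy : ((7 / 4 : ℚ) : WithTop ℚ) ≤ ord y := by
    have hc : ord (θ ^ 20 * (u + y) ^ 8) = ((-16 : ℚ) : WithTop ℚ) := by
      rw [hord_mul, ord_pow_eq hord_top hord_mul hθ, ord_pow_eq hord_top hord_mul hx,
        ← WithTop.coe_add]
      norm_num
    have key : θ ^ 20 * (u + y) ^ 8 * y ^ 8
        = θ ^ 4 * (u + y) ^ 4 + θ ^ 3 * (u + y) ^ 2 + θ ^ 2 * (u + y) ^ 1 := by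
      linear_combination hE - θ ^ 16 * (u + y) ^ 8 * hu8
        - θ ^ 20 * (u + y) ^ 8 * hp8 u y
        - (θ ^ 4 * (u + y) ^ 4 + θ ^ 3 * (u + y) ^ 2 + θ ^ 2 * (u + y) + θ ^ 16 * (u + y) ^ 8) * h2
    refine le_ord_of_le_ord_mul_pow hord_top hord_mul (n := 8) (by norm_num) hc ?_
    rw [key]
    refine hadd (hadd ?_ ?_) ?_ <;>
      exact le_ord_term hord_top hord_mul hθ hx.ge _ _ (by norm_num)
  have hyw : ((63 / 32 : ℚ) : WithTop ℚ) ≤ ord (y + w) := by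
    have key : θ ^ 16 * (y + w) ^ 8
        = θ ^ 20 * y ^ 16 + θ ^ 4 * y ^ 4 + θ ^ 3 * y ^ 2 + θ ^ 2 * y ^ 1 := by
      rw [hp16, hp8, hp4, hp2] at hE
      rw [hp8]
      linear_combination hE + hwu - θ ^ 12 * (θ ^ 4 * u ^ 8 + 1) * hu8
        - θ ^ 12 * hu8 - θ ^ 2 * hu4 - θ ^ 2 * hu'
        - (θ ^ 20 * y ^ 16 + θ ^ 4 * y ^ 4 + θ ^ 3 * y ^ 2 + θ ^ 2 * y + θ ^ 12 + θ ^ 2) * h2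
    refine le_ord_of_le_ord_mul_pow hord_top hord_mul (n := 8) (by norm_num)
      (ord_pow_eq hord_top hord_mul hθ 16) ?_
    rw [key]
    refine hadd (hadd (hadd ?_ ?_) ?_) ?_ <;>
      exact le_ord_term hord_top hord_mul hθ hy _ _ (by norm_num)
  have hfin : u + y - u - w = y + w := by linear_combination -w * h2
  rw [hfin]
  exact lt_of_lt_of_le (WithTop.coe_lt_coe.2 (by norm_num)) hyw
end

section
/- The equation (E_A) has a solution (x_0, x_1, x_2, ...) with ord(x_i) = 2 − 3/2^{i+1} for every i ≥ 0. (Lemma 4.4a) -/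
/-- A solution of the affine equation (E_A) of the t-motive `M(A)`,
`A = [[θ, θ⁶],[θ⁻², 0]]`, `q = 2`. -/
def IsSolEA {K : Type*} [Field K] (θ : K) (x : ℕ → K) : Prop :=
  ∀ i : ℕ,
    θ ^ 20 * x i ^ 16 + θ ^ 16 * x i ^ 8 + θ ^ 4 * x i ^ 4 + θ ^ 3 * x i ^ 2 + θ ^ 2 * x i
      + (θ ^ 16 + θ ^ 12) * extSeq x ((i : ℤ) - 1) ^ 16
      + θ ^ 12 * extSeq x ((i : ℤ) - 1) ^ 8
      + (θ ^ 8 + θ ^ 2) * extSeq x ((i : ℤ) - 1) ^ 4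
      + θ ^ 8 * extSeq x ((i : ℤ) - 2) ^ 16 = 0

open Polynomial in
/-- If no root of `P` has the valuation of `y`, then `v (P.eval y)` depends only on `v y`. -/
theorem exists_root_of_ne {K : Type*} [Field K] [IsAlgClosed K]
    (v : AddValuation K (WithTop ℚ)) (P : K[X]) (y y' : K) (hy : v y = v y')
    (h : v (P.eval y) ≠ v (P.eval y')) : ∃ z, P.eval z = 0 ∧ v z = v y := by
  by_contra! hno
  apply h
  have key : ∀ z ∈ P.roots, v (y - z) = v (y' - z) := by
    intro z hz
    have hz0 : v z ≠ v y := hno z (by simpa using (mem_roots'.1 hz).2)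
    rcases lt_or_gt_of_ne hz0 with hlt | hlt
    · rw [v.map_sub_swap, v.map_sub_swap y', v.map_sub_eq_of_lt_left hlt,
        v.map_sub_eq_of_lt_left (hy ▸ hlt)]
    · rw [v.map_sub_eq_of_lt_left hlt, v.map_sub_eq_of_lt_left (hy ▸ hlt), hy]
  have prodeq : ∀ s : Multiset K, (∀ z ∈ s, v (y - z) = v (y' - z)) →
      v (s.map (fun z => y - z)).prod = v (s.map (fun z => y' - z)).prod := by
    intro s
    induction s using Multiset.induction with
    | empty => simp
    | cons a s ih =>
      intro hs
      simp only [Multiset.map_cons, Multiset.prod_cons, v.map_mul]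
      rw [hs a (by simp), ih fun z hz => hs z (by simp [hz])]
  have hs := IsAlgClosed.splits P
  rw [hs.eval_eq_prod_roots, hs.eval_eq_prod_roots, v.map_mul, v.map_mul, prodeq _ key]

theorem val_mono {K : Type*} [Field K] (v : AddValuation K (WithTop ℚ)) {θ x : K} {a : ℚ}
    (hθ : v θ = ((-1 : ℚ) : WithTop ℚ)) (hx : v x = (a : WithTop ℚ)) (n m : ℕ) :
    v (θ ^ n * x ^ m) = ((m * a - n : ℚ) : WithTop ℚ) := by
  rw [v.map_mul, v.map_pow, v.map_pow, hθ, hx, ← WithTop.coe_nsmul, ← WithTop.coe_nsmul,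
    ← WithTop.coe_add]
  congr 1
  simp only [nsmul_eq_mul]
  ring

theorem lt_val_mono {K : Type*} [Field K] (v : AddValuation K (WithTop ℚ)) {θ x : K} {a : ℚ}
    (hθ : v θ = ((-1 : ℚ) : WithTop ℚ)) (hx : v x = (a : WithTop ℚ)) (n m : ℕ) {r : ℚ}
    (h : r < m * a - n) : (r : WithTop ℚ) < v (θ ^ n * x ^ m) := by
  rw [val_mono v hθ hx]
  exact_mod_cast h

/-- A primitive cube root of unity, which exists and is a unit for every valuation. -/
theorem exists_omega {K : Type*} [Field K] [IsAlgClosed K] (v : AddValuation K (WithTop ℚ)) :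
    ∃ ω : K, ω ^ 2 + ω + 1 = 0 ∧ v ω = 0 := by
  obtain ⟨ω, hω⟩ := IsAlgClosed.exists_root (Polynomial.X ^ 2 + Polynomial.X + 1 : Polynomial K)
    (by
      have : (Polynomial.X ^ 2 + Polynomial.X + 1 : Polynomial K).degree = 2 := by
        compute_degree!
      rw [this]; decide)
  have hω' : ω ^ 2 + ω + 1 = 0 := by simpa [Polynomial.IsRoot] using hω
  refine ⟨ω, hω', ?_⟩
  have h3 : ω ^ 3 = 1 := by linear_combination (ω - 1) * hω'
  have hv : (3 : ℕ) • v ω = 0 := by rw [← v.map_pow, h3, v.map_one]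
  cases hq : v ω with
  | top => rw [hq] at hv; exact absurd hv (by decide)
  | coe q =>
    rw [hq, ← WithTop.coe_nsmul] at hv
    have : (3 : ℕ) • q = 0 := by exact_mod_cast hv
    have : q = 0 := by simpa using this
    rw [this]; rfl

/-- The polynomial of which `x i` is a root, with constant term `c`. -/
noncomputable def polyEA {K : Type*} [Field K] (θ c : K) : Polynomial K :=
  .C (θ ^ 20) * .X ^ 16 + .C (θ ^ 16) * .X ^ 8 + .C (θ ^ 4) * .X ^ 4 + .C (θ ^ 3) * .X ^ 2
    + .C (θ ^ 2) * .X + .C c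

theorem polyEA_eval {K : Type*} [Field K] (θ c x : K) :
    (polyEA θ c).eval x
      = θ ^ 20 * x ^ 16 + θ ^ 16 * x ^ 8 + θ ^ 4 * x ^ 4 + θ ^ 3 * x ^ 2 + θ ^ 2 * x + c := by
  simp [polyEA]

/-- The part of the equation for `x i` depending on `x = x (i-1)` and `p = x (i-2)`. -/
def constEA {K : Type*} [Field K] (θ x p : K) : K :=
  (θ ^ 16 + θ ^ 12) * x ^ 16 + θ ^ 12 * x ^ 8 + (θ ^ 8 + θ ^ 2) * x ^ 4 + θ ^ 8 * p ^ 16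

/-- The Newton polygon slope `1/2` when the constant term vanishes. -/
theorem root_zero {K : Type*} [Field K] [IsAlgClosed K] [CharP K 2]
    (v : AddValuation K (WithTop ℚ)) {θ : K} (hθ : v θ = ((-1 : ℚ) : WithTop ℚ))
    {y : K} (hy : v y = ((1 / 2 : ℚ) : WithTop ℚ)) (hyθ : θ ^ 4 * y ^ 8 = 1) :
    ∃ x, (polyEA θ 0).eval x = 0 ∧ v x = ((1 / 2 : ℚ) : WithTop ℚ) := by
  obtain ⟨ω, hω, hvω⟩ := exists_omega v
  have h2 : (2 : K) = 0 := CharTwo.two_eq_zero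
  have hy' : v (ω * y) = ((1 / 2 : ℚ) : WithTop ℚ) := by rw [v.map_mul, hvω, zero_add, hy]
  have small : ∀ z, v z = ((1 / 2 : ℚ) : WithTop ℚ) →
      ((-12 : ℚ) : WithTop ℚ) < v (θ ^ 4 * z ^ 4 + θ ^ 3 * z ^ 2 + θ ^ 2 * z ^ 1) := fun z hz =>
    v.map_lt_add (v.map_lt_add (lt_val_mono v hθ hz _ _ (by norm_num))
      (lt_val_mono v hθ hz _ _ (by norm_num))) (lt_val_mono v hθ hz _ _ (by norm_num))
  have e1 : (polyEA θ 0).eval y = θ ^ 4 * y ^ 4 + θ ^ 3 * y ^ 2 + θ ^ 2 * y ^ 1 := by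
    rw [polyEA_eval]
    linear_combination (θ ^ 16 * y ^ 8) * hyθ + θ ^ 16 * y ^ 8 * h2
  have h3 : ω ^ 3 = 1 := by linear_combination (ω - 1) * hω
  have e2 : (polyEA θ 0).eval (ω * y) = θ ^ 16 * y ^ 8 +
      (θ ^ 4 * (ω * y) ^ 4 + θ ^ 3 * (ω * y) ^ 2 + θ ^ 2 * (ω * y) ^ 1) := by
    have h16 : ω ^ 16 = ω := by
      linear_combination ω * (ω ^ 12 + ω ^ 9 + ω ^ 6 + ω ^ 3 + 1) * h3
    have h8 : ω ^ 8 = ω ^ 2 := by linear_combination ω ^ 2 * (ω ^ 3 + 1) * h3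
    rw [polyEA_eval, mul_pow _ _ 16, mul_pow _ _ 8, h16, h8]
    linear_combination (θ ^ 16 * y ^ 8 * ω) * hyθ + θ ^ 16 * y ^ 8 * hω - θ ^ 16 * y ^ 8 * h2
  obtain ⟨z, hz, hvz⟩ := exists_root_of_ne v (polyEA θ 0) y (ω * y) (hy.trans hy'.symm) (by
    have hm : v (θ ^ 16 * y ^ 8) = ((-12 : ℚ) : WithTop ℚ) := by
      rw [val_mono v hθ hy]; norm_num
    rw [e1, e2, v.map_add_eq_of_lt_left (x := θ ^ 16 * y ^ 8) (hm ▸ small _ hy'), hm]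
    exact (small _ hy).ne')
  exact ⟨z, hz, hvz.trans hy⟩

/-- The Newton polygon slope `2 - e` when the constant term has valuation `-8e`. -/
theorem root_step {K : Type*} [Field K] [IsAlgClosed K] [CharP K 2]
    (v : AddValuation K (WithTop ℚ)) {θ : K} (hθ : v θ = ((-1 : ℚ) : WithTop ℚ))
    {e : ℚ} (he0 : 0 < e) (he : e < 3 / 2) {c : K} (hc : v c = ((-8 * e : ℚ) : WithTop ℚ)) :
    ∃ x, (polyEA θ c).eval x = 0 ∧ v x = ((2 - e : ℚ) : WithTop ℚ) := by
  obtain ⟨ω, hω, hvω⟩ := exists_omega v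
  have h2 : (2 : K) = 0 := CharTwo.two_eq_zero
  have hθ0 : θ ≠ 0 := by
    rintro rfl
    rw [v.map_zero] at hθ
    exact WithTop.top_ne_coe hθ
  obtain ⟨y, hy8⟩ := IsAlgClosed.exists_pow_nat_eq (c / θ ^ 16) (n := 8) (by norm_num)
  have hyc : θ ^ 16 * y ^ 8 = c := by rw [hy8]; field_simp
  have hy : v y = ((2 - e : ℚ) : WithTop ℚ) := by
    have h := congrArg v hyc
    cases hq : v y with
    | top =>
      rw [(v.top_iff).1 hq, zero_pow (by norm_num), mul_zero, v.map_zero, hc] at h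
      exact absurd h (WithTop.top_ne_coe)
    | coe q =>
      rw [val_mono v hθ hq, hc] at h
      have h' : ((8 : ℕ) * q - (16 : ℕ) : ℚ) = -8 * e := by exact_mod_cast h
      push_cast at h'
      congr 1
      linarith
  have hy' : v (ω * y) = ((2 - e : ℚ) : WithTop ℚ) := by rw [v.map_mul, hvω, zero_add, hy]
  have small : ∀ z, v z = ((2 - e : ℚ) : WithTop ℚ) → ((-8 * e : ℚ) : WithTop ℚ) <
      v (θ ^ 20 * z ^ 16 + θ ^ 4 * z ^ 4 + θ ^ 3 * z ^ 2 + θ ^ 2 * z ^ 1) := fun z hz =>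
    v.map_lt_add (v.map_lt_add (v.map_lt_add
      (lt_val_mono v hθ hz _ _ (by norm_num; linarith))
      (lt_val_mono v hθ hz _ _ (by norm_num; linarith)))
      (lt_val_mono v hθ hz _ _ (by norm_num; linarith)))
      (lt_val_mono v hθ hz _ _ (by norm_num; linarith))
  have e1 : (polyEA θ c).eval y
      = θ ^ 20 * y ^ 16 + θ ^ 4 * y ^ 4 + θ ^ 3 * y ^ 2 + θ ^ 2 * y ^ 1 := by
    rw [polyEA_eval]
    linear_combination hyc + c * h2
  have h3 : ω ^ 3 = 1 := by linear_combination (ω - 1) * hω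
  have e2 : (polyEA θ c).eval (ω * y) = ω * c +
      (θ ^ 20 * (ω * y) ^ 16 + θ ^ 4 * (ω * y) ^ 4 + θ ^ 3 * (ω * y) ^ 2
        + θ ^ 2 * (ω * y) ^ 1) := by
    have h8 : ω ^ 8 = ω ^ 2 := by linear_combination ω ^ 2 * (ω ^ 3 + 1) * h3
    rw [polyEA_eval, mul_pow _ _ 8, h8]
    linear_combination ω ^ 2 * hyc + c * hω - ω * c * h2
  obtain ⟨z, hz, hvz⟩ := exists_root_of_ne v (polyEA θ c) y (ω * y) (hy.trans hy'.symm) (by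
    have hm : v (ω * c) = ((-8 * e : ℚ) : WithTop ℚ) := by
      rw [v.map_mul, hvω, zero_add, hc]
    rw [e1, e2, v.map_add_eq_of_lt_left (x := ω * c) (hm ▸ small _ hy'), hm]
    exact (small _ hy).ne')
  exact ⟨z, hz, hvz.trans hy⟩

/-- For the equation at index `1`, the terms `θ¹⁶x¹⁶ + θ¹²x⁸` are replaced by means of the
equation satisfied by `x = x 0`. -/
theorem val_const_zero {K : Type*} [Field K] (v : AddValuation K (WithTop ℚ)) {θ x : K}
    (hθ : v θ = ((-1 : ℚ) : WithTop ℚ)) (hx : v x = ((1 / 2 : ℚ) : WithTop ℚ))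
    (h0 : (polyEA θ 0).eval x = 0) : v (constEA θ x 0) = ((-6 : ℚ) : WithTop ℚ) := by
  have hθ0 : θ ≠ 0 := by
    rintro rfl
    rw [v.map_zero] at hθ
    exact WithTop.top_ne_coe hθ
  have hθ4 : v (θ ^ 4) = ((-4 : ℚ) : WithTop ℚ) := by
    have := val_mono v hθ hx 4 0
    simpa using this
  have hm : v (θ ^ 8 * x ^ 4) = ((-6 : ℚ) : WithTop ℚ) := by
    rw [val_mono v hθ hx]; norm_num
  have e : constEA θ x 0 = θ ^ 8 * x ^ 4
      + (θ ^ 12 * x ^ 16 + θ ^ 2 * x ^ 4 - (θ ^ 0 * x ^ 4 + (θ ^ 3 * x ^ 2 + θ ^ 2 * x) / θ ^ 4)) := by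
    rw [polyEA_eval] at h0
    have hD : θ ^ 4 * ((θ ^ 3 * x ^ 2 + θ ^ 2 * x) / θ ^ 4) = θ ^ 3 * x ^ 2 + θ ^ 2 * x :=
      mul_div_cancel₀ _ (pow_ne_zero 4 hθ0)
    unfold constEA
    apply mul_left_cancel₀ (pow_ne_zero 4 hθ0)
    linear_combination h0 + hD
  have hdiv : ((-6 : ℚ) : WithTop ℚ) < v ((θ ^ 3 * x ^ 2 + θ ^ 2 * x) / θ ^ 4) := by
    have hlt : ((-10 : ℚ) : WithTop ℚ) < v (θ ^ 3 * x ^ 2 + θ ^ 2 * x ^ 1) :=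
      v.map_lt_add (lt_val_mono v hθ hx _ _ (by norm_num)) (lt_val_mono v hθ hx _ _ (by norm_num))
    have hmul : θ ^ 3 * x ^ 2 + θ ^ 2 * x ^ 1
        = (θ ^ 3 * x ^ 2 + θ ^ 2 * x) / θ ^ 4 * θ ^ 4 := by field_simp
    rw [hmul, v.map_mul, hθ4] at hlt
    cases hq : v ((θ ^ 3 * x ^ 2 + θ ^ 2 * x) / θ ^ 4) with
    | top => exact WithTop.coe_lt_top _
    | coe q =>
      rw [hq, ← WithTop.coe_add, WithTop.coe_lt_coe] at hlt
      rw [WithTop.coe_lt_coe]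
      linarith
  rw [e, v.map_add_eq_of_lt_left, hm]
  rw [hm]
  rw [sub_eq_add_neg]
  refine v.map_lt_add (v.map_lt_add (lt_val_mono v hθ hx _ _ (by norm_num))
    (lt_val_mono v hθ hx _ _ (by norm_num))) ?_
  rw [v.map_neg]
  exact v.map_lt_add (lt_val_mono v hθ hx _ _ (by norm_num)) hdiv

theorem val_const_step {K : Type*} [Field K] (v : AddValuation K (WithTop ℚ)) {θ x p : K}
    (hθ : v θ = ((-1 : ℚ) : WithTop ℚ)) {f : ℚ} (hf0 : 0 < f) (hf : f ≤ 3 / 4)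
    (hx : v x = ((2 - f : ℚ) : WithTop ℚ)) (hp : v p = ((2 - 2 * f : ℚ) : WithTop ℚ)) :
    v (constEA θ x p) = ((-4 * f : ℚ) : WithTop ℚ) := by
  have hm : v (θ ^ 8 * x ^ 4) = ((-4 * f : ℚ) : WithTop ℚ) := by
    rw [val_mono v hθ hx]; congr 1; push_cast; ring
  have e : constEA θ x p = θ ^ 8 * x ^ 4 + (θ ^ 16 * x ^ 16 + θ ^ 12 * x ^ 16 + θ ^ 12 * x ^ 8
      + θ ^ 2 * x ^ 4 + θ ^ 8 * p ^ 16) := by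
    unfold constEA; ring
  rw [e, v.map_add_eq_of_lt_left, hm]
  rw [hm]
  exact v.map_lt_add (v.map_lt_add (v.map_lt_add (v.map_lt_add
    (lt_val_mono v hθ hx _ _ (by norm_num; linarith))
    (lt_val_mono v hθ hx _ _ (by norm_num; linarith)))
    (lt_val_mono v hθ hx _ _ (by norm_num; linarith)))
    (lt_val_mono v hθ hx _ _ (by norm_num; linarith)))
    (lt_val_mono v hθ hp _ _ (by norm_num; linarith))

/-- Lemma 4.4a: equation (E_A) has a solution with `ord (x i) = 2 - 3/2^(i+1)`. -/
theorem EA_has_solution_with_ord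
    {K : Type*} [Field K] [IsAlgClosed K] [CharP K 2]
    (ord : K → WithTop ℚ)
    (hord_top : ∀ z : K, ord z = ⊤ ↔ z = 0)
    (hord_mul : ∀ z w : K, ord (z * w) = ord z + ord w)
    (hord_add : ∀ z w : K, min (ord z) (ord w) ≤ ord (z + w))
    (hord_surj : Function.Surjective ord)
    (θ : K) (hθ : ord θ = ((-1 : ℚ) : WithTop ℚ)) :
    ∃ x : ℕ → K, IsSolEA θ x ∧
      ∀ i : ℕ, ord (x i) = ((2 - 3 / 2 ^ (i + 1) : ℚ) : WithTop ℚ) := by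
  have hord_one : ord 1 = 0 := by
    have h := hord_mul 1 1
    rw [mul_one] at h
    cases hq : ord 1 with
    | top => exact absurd ((hord_top 1).1 hq) one_ne_zero
    | coe q =>
      rw [hq, ← WithTop.coe_add, WithTop.coe_inj] at h
      have : q = 0 := by linarith
      rw [this]; rfl
  obtain ⟨v, hv⟩ : ∃ v : AddValuation K (WithTop ℚ), ∀ z, v z = ord z :=
    ⟨AddValuation.of ord ((hord_top 0).2 rfl) hord_one hord_add hord_mul, fun z => rfl⟩
  simp only [← hv] at hθ ⊢
  have hθ0 : θ ≠ 0 := by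
    rintro rfl
    rw [v.map_zero] at hθ
    exact WithTop.top_ne_coe hθ
  obtain ⟨x0, hx0, hvx0⟩ : ∃ x, (polyEA θ 0).eval x = 0 ∧ v x = ((1 / 2 : ℚ) : WithTop ℚ) := by
    obtain ⟨y, hy8⟩ := IsAlgClosed.exists_pow_nat_eq (1 / θ ^ 4) (n := 8) (by norm_num)
    have hyθ : θ ^ 4 * y ^ 8 = 1 := by rw [hy8]; field_simp
    refine root_zero v hθ (y := y) ?_ hyθ
    have h := congrArg v hyθ
    cases hq : v y with
    | top =>
      rw [(v.top_iff).1 hq, zero_pow (by norm_num), mul_zero, v.map_zero, v.map_one] at h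
      exact absurd h WithTop.top_ne_zero
    | coe q =>
      rw [val_mono v hθ hq, v.map_one] at h
      have h' : ((8 : ℕ) * q - (4 : ℕ) : ℚ) = 0 := by exact_mod_cast h
      push_cast at h'
      congr 1
      linarith
  -- The recursion carries pairs `(x (n-1), x n)`, with the valuation of the constant term of the
  -- equation at index `n + 1` as part of the invariant.
  let I : ℕ → K × K → Prop := fun n s =>
    v s.2 = ((2 - 3 / 2 ^ (n + 1) : ℚ) : WithTop ℚ) ∧
      v (constEA θ s.2 s.1) = ((-4 * (3 / 2 ^ (n + 1)) : ℚ) : WithTop ℚ)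
  have step : ∀ (n : ℕ) (s : K × K), ∃ x', I n s →
      (polyEA θ (constEA θ s.2 s.1)).eval x' = 0 ∧ I (n + 1) (s.2, x') := by
    intro n s
    by_cases hI : I n s
    swap
    · exact ⟨0, fun h => absurd h hI⟩
    obtain ⟨h1, h2⟩ := hI
    have hpow : (3 : ℚ) / 2 ^ (n + 1) = 2 * (3 / 2 ^ (n + 1 + 1)) := by
      rw [pow_succ _ (n + 1)]; field_simp
    have hpos : (0 : ℚ) < 3 / 2 ^ (n + 1 + 1) := by positivity
    have hle : (3 : ℚ) / 2 ^ (n + 1 + 1) ≤ 3 / 4 := by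
      have : (1 : ℚ) ≤ 2 ^ n := one_le_pow₀ (by norm_num)
      gcongr
      rw [pow_succ, pow_succ]
      linarith
    rw [hpow] at h1 h2
    obtain ⟨x', hx', hvx'⟩ := root_step v hθ hpos (by linarith) (c := constEA θ s.2 s.1)
      (by rw [h2]; congr 1; ring)
    exact ⟨x', fun _ => ⟨hx', hvx', val_const_step v hθ hpos hle hvx' h1⟩⟩
  choose next hnext using step
  let f : ℕ → K × K := fun n => Nat.rec (0, x0) (fun n s => (s.2, next n s)) n
  have hf : ∀ n, f (n + 1) = ((f n).2, next n (f n)) := fun n => rfl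
  have hI : ∀ n, I n (f n) := by
    intro n
    induction n with
    | zero =>
      refine ⟨?_, ?_⟩
      · change v x0 = _
        rw [hvx0]; norm_num
      · change v (constEA θ x0 0) = _
        rw [val_const_zero v hθ hvx0 hx0]; norm_num
    | succ n ih => rw [hf]; exact (hnext n _ ih).2
  refine ⟨fun n => (f n).2, ?_, fun n => (hI n).1⟩
  have hprev : ∀ n : ℕ, extSeq (fun n => (f n).2) ((n : ℤ) - 1) = (f n).1 := by
    intro n
    cases n with
    | zero => simp [extSeq, f]
    | succ n => simp [extSeq, hf]
  intro i
  cases i with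
  | zero =>
    rw [polyEA_eval] at hx0
    have e2 : extSeq (fun n => (f n).2) (((0 : ℕ) : ℤ) - 2) = 0 := by simp [extSeq]
    rw [hprev, e2]
    change θ ^ 20 * x0 ^ 16 + θ ^ 16 * x0 ^ 8 + θ ^ 4 * x0 ^ 4 + θ ^ 3 * x0 ^ 2 + θ ^ 2 * x0
      + (θ ^ 16 + θ ^ 12) * 0 ^ 16 + θ ^ 12 * 0 ^ 8 + (θ ^ 8 + θ ^ 2) * 0 ^ 4 + θ ^ 8 * 0 ^ 16 = 0
    linear_combination hx0
  | succ n =>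
    have h := (hnext n _ (hI n)).1
    rw [polyEA_eval] at h
    have e2 : (((n + 1 : ℕ) : ℤ) - 2) = (n : ℤ) - 1 := by push_cast; ring
    rw [hprev, e2, hprev]
    simp only [hf]
    unfold constEA at h
    linear_combination h
end

section
/- For every x_0 ∈ K with ord(x_0) = 2 satisfying the head equation θ^{20}x_0^{16} + θ^{16}x_0^{8} + θ^{4}x_0^{4} + θ^{3}x_0^{2} + θ^{2}x_0 = 0, there exists a solution (x_0, x_1, x_2, ...) of (E_A) extending x_0 such that ord(x_i) = 2 for every i ≥ 0. (Lemma 4.5) -/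
/-!
Write `H` for the left side of the head equation. At each step `x_{i+1}` is a root of `H + c`,
where `c` collects the terms in `x_i` and `x_{i-1}`. If `ord x_i = 2` and `ord x_{i-1} ≥ 2`, then
`θ ^ 8 * x_i ^ 4` is the only term of `c` of valuation `0` and the others have positive valuation,
so `ord c = 0` (`ord_tail`).

The Newton polygon of `H + c` then has vertices `(0, 0)`, `(8, -16)`, `(16, -20)`, so eight roots
have valuation `2` and eight have valuation `1/2`. The existence of a root of valuation `2` is
obtained without Newton polygons (`exists_root_ord_two`): comparing terms shows that no root has
valuation in `(1/2, 2)` or above `2`, and if all roots had valuation at most `1/2` their product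
`c / θ ^ 20` would have valuation at most `8` rather than `20`.
-/

open Polynomial in
/-- By Vieta, the valuations of the roots sum to that of `P(0)` minus that of the leading
coefficient; if this exceeds `s * deg P`, then some root has valuation greater than `s`. -/
theorem exists_root_ord_gt {K : Type*} [Field K] [IsAlgClosed K]
    (v : AddValuation K (WithTop ℚ)) (P : K[X]) (s : ℚ)
    (h : v P.leadingCoeff + ((P.natDegree * s : ℚ) : WithTop ℚ) < v (P.eval 0)) :
    ∃ y, P.eval y = 0 ∧ (s : WithTop ℚ) < v y := by
  by_contra! hn
  have hs : P.Splits := IsAlgClosed.splits P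
  have hprod : ∀ m : Multiset K, (∀ y ∈ m, v y ≤ (s : WithTop ℚ)) →
      v (m.map fun y => 0 - y).prod ≤ ((m.card * s : ℚ) : WithTop ℚ) := by
    intro m
    induction m using Multiset.induction_on with
    | empty => intro _; simp
    | cons a m ih =>
      intro hm
      have h1 := hm a (Multiset.mem_cons_self _ _)
      have h2 := ih fun y hy => hm y (Multiset.mem_cons_of_mem hy)
      rw [Multiset.map_cons, Multiset.prod_cons, v.map_mul, zero_sub, v.map_neg,
        Multiset.card_cons]
      refine (add_le_add h1 h2).trans (le_of_eq ?_)
      rw [← WithTop.coe_add]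
      congr 1
      push_cast
      ring
  have hr := hprod P.roots fun y hy => hn y (isRoot_of_mem_roots hy)
  rw [← hs.natDegree_eq_card_roots] at hr
  rw [hs.eval_eq_prod_roots, v.map_mul] at h
  exact absurd h (not_lt.mpr (add_le_add le_rfl hr))

theorem ord_monomial {K : Type*} [Field K] (v : AddValuation K (WithTop ℚ)) {θ x : K} {r : ℚ}
    (hθ : v θ = ((-1 : ℚ) : WithTop ℚ)) (hx : v x = (r : WithTop ℚ)) (n m : ℕ) :
    v (θ ^ n * x ^ m) = ((m * r - n : ℚ) : WithTop ℚ) := by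
  rw [v.map_mul, v.map_pow, v.map_pow, hθ, hx, ← WithTop.coe_nsmul, ← WithTop.coe_nsmul,
    ← WithTop.coe_add]
  congr 1
  simp only [nsmul_eq_mul]
  ring

/-- The terms of the equation involving the two preceding entries `a`, `b` have total
valuation `0`, the valuation of the dominant term `θ ^ 8 * a ^ 4`. -/
theorem ord_tail {K : Type*} [Field K] (v : AddValuation K (WithTop ℚ)) {θ a b : K}
    (hθ : v θ = ((-1 : ℚ) : WithTop ℚ)) (ha : v a = ((2 : ℚ) : WithTop ℚ))
    (hb : b = 0 ∨ v b = ((2 : ℚ) : WithTop ℚ)) :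
    v ((θ ^ 16 + θ ^ 12) * a ^ 16 + θ ^ 12 * a ^ 8 + (θ ^ 8 + θ ^ 2) * a ^ 4 + θ ^ 8 * b ^ 16)
      = ((0 : ℚ) : WithTop ℚ) := by
  have e : (θ ^ 16 + θ ^ 12) * a ^ 16 + θ ^ 12 * a ^ 8 + (θ ^ 8 + θ ^ 2) * a ^ 4 + θ ^ 8 * b ^ 16
      = θ ^ 8 * a ^ 4 + (θ ^ 16 * a ^ 16 + θ ^ 12 * a ^ 16 + θ ^ 12 * a ^ 8 + θ ^ 2 * a ^ 4
        + θ ^ 8 * b ^ 16) := by ring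
  have h0 : v (θ ^ 8 * a ^ 4) = ((0 : ℚ) : WithTop ℚ) := by
    rw [ord_monomial v hθ ha]; norm_num
  have hpos : ((0 : ℚ) : WithTop ℚ) < v (θ ^ 16 * a ^ 16 + θ ^ 12 * a ^ 16 + θ ^ 12 * a ^ 8
      + θ ^ 2 * a ^ 4 + θ ^ 8 * b ^ 16) := by
    refine v.map_lt_add (v.map_lt_add (v.map_lt_add (v.map_lt_add ?_ ?_) ?_) ?_) ?_
    · rw [ord_monomial v hθ ha, WithTop.coe_lt_coe]; norm_num
    · rw [ord_monomial v hθ ha, WithTop.coe_lt_coe]; norm_num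
    · rw [ord_monomial v hθ ha, WithTop.coe_lt_coe]; norm_num
    · rw [ord_monomial v hθ ha, WithTop.coe_lt_coe]; norm_num
    · rcases hb with rfl | hb
      · simp
      · rw [ord_monomial v hθ hb, WithTop.coe_lt_coe]; norm_num
  rw [e, v.map_add_eq_of_lt_left (h0 ▸ hpos), h0]

open Polynomial in
/-- If `ord c = 0`, the inhomogeneous head equation with constant term `c` has a root of
valuation `2`. -/
theorem exists_root_ord_two {K : Type*} [Field K] [IsAlgClosed K]
    (v : AddValuation K (WithTop ℚ)) {θ c : K}
    (hθ : v θ = ((-1 : ℚ) : WithTop ℚ)) (hc : v c = ((0 : ℚ) : WithTop ℚ)) :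
    ∃ y : K, θ ^ 20 * y ^ 16 + θ ^ 16 * y ^ 8 + θ ^ 4 * y ^ 4 + θ ^ 3 * y ^ 2 + θ ^ 2 * y + c = 0
      ∧ v y = ((2 : ℚ) : WithTop ℚ) := by
  have hθ0 : θ ≠ 0 := by
    rintro rfl
    rw [v.map_zero] at hθ
    exact WithTop.coe_ne_top hθ.symm
  have hc0 : c ≠ 0 := by
    rintro rfl
    rw [v.map_zero] at hc
    exact WithTop.coe_ne_top hc.symm
  have hP : ∃ P : K[X], P = C (θ ^ 20) * X ^ 16 + C (θ ^ 16) * X ^ 8 + C (θ ^ 4) * X ^ 4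
    + C (θ ^ 3) * X ^ 2 + C (θ ^ 2) * X + C c := ⟨_, rfl⟩
  obtain ⟨P, hP⟩ := hP
  have hdeg : P.natDegree = 16 := by
    rw [hP]
    compute_degree!
  have hlead : P.leadingCoeff = θ ^ 20 := by
    rw [leadingCoeff, hdeg, hP]
    simp only [coeff_add, coeff_C_mul, coeff_X_pow, coeff_X, coeff_C]
    norm_num
  obtain ⟨y, hy, hlt⟩ := exists_root_ord_gt v P (1 / 2) (by
    have h20 : v (θ ^ 20) = ((-20 : ℚ) : WithTop ℚ) := by
      have := ord_monomial v hθ hθ 20 0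
      simpa using this
    rw [hlead, hdeg, h20, ← WithTop.coe_add]
    have : P.eval 0 = c := by simp [hP]
    rw [this, hc, WithTop.coe_lt_coe]
    norm_num)
  have hy' : θ ^ 20 * y ^ 16 + θ ^ 16 * y ^ 8 + θ ^ 4 * y ^ 4 + θ ^ 3 * y ^ 2 + θ ^ 2 * y + c
      = 0 := by
    simpa [hP] using hy
  refine ⟨y, hy', ?_⟩
  have hy0 : y ≠ 0 := by
    rintro rfl
    exact hc0 (by simpa using hy')
  obtain ⟨r, hr⟩ := WithTop.ne_top_iff_exists.mp (v.ne_top_iff.mpr hy0)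
  have hr := hr.symm
  rw [hr, WithTop.coe_lt_coe] at hlt
  have h16 := ord_monomial v hθ hr 20 16
  have h8 := ord_monomial v hθ hr 16 8
  have h4 := ord_monomial v hθ hr 4 4
  have h2 := ord_monomial v hθ hr 3 2
  have h1 := ord_monomial v hθ hr 2 1
  rw [pow_one] at h1
  simp only [Nat.cast_ofNat, Nat.cast_one] at h16 h8 h4 h2 h1
  rw [hr]
  congr 1
  rcases lt_trichotomy r 2 with h | h | h
  · -- the term of degree 8 would be strictly dominant
    exfalso
    have key : ((8 * r - 16 : ℚ) : WithTop ℚ) < v (θ ^ 20 * y ^ 16 + θ ^ 4 * y ^ 4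
        + θ ^ 3 * y ^ 2 + θ ^ 2 * y + c) := by
      refine v.map_lt_add (v.map_lt_add (v.map_lt_add (v.map_lt_add ?_ ?_) ?_) ?_) ?_
      · rw [h16, WithTop.coe_lt_coe]; linarith
      · rw [h4, WithTop.coe_lt_coe]; linarith
      · rw [h2, WithTop.coe_lt_coe]; linarith
      · rw [h1, WithTop.coe_lt_coe]; linarith
      · rw [hc, WithTop.coe_lt_coe]; linarith
    have e : θ ^ 20 * y ^ 16 + θ ^ 4 * y ^ 4 + θ ^ 3 * y ^ 2 + θ ^ 2 * y + c
        = -(θ ^ 16 * y ^ 8) := by linear_combination hy'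
    rw [e, v.map_neg, h8] at key
    exact lt_irrefl _ key
  · exact h
  · -- the constant term would be strictly dominant
    exfalso
    have key : ((0 : ℚ) : WithTop ℚ) < v (θ ^ 20 * y ^ 16 + θ ^ 16 * y ^ 8 + θ ^ 4 * y ^ 4
        + θ ^ 3 * y ^ 2 + θ ^ 2 * y) := by
      refine v.map_lt_add (v.map_lt_add (v.map_lt_add (v.map_lt_add ?_ ?_) ?_) ?_) ?_
      · rw [h16, WithTop.coe_lt_coe]; linarith
      · rw [h8, WithTop.coe_lt_coe]; linarith
      · rw [h4, WithTop.coe_lt_coe]; linarith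
      · rw [h2, WithTop.coe_lt_coe]; linarith
      · rw [h1, WithTop.coe_lt_coe]; linarith
    have e : θ ^ 20 * y ^ 16 + θ ^ 16 * y ^ 8 + θ ^ 4 * y ^ 4 + θ ^ 3 * y ^ 2 + θ ^ 2 * y
        = -c := by linear_combination hy'
    rw [e, v.map_neg, hc] at key
    exact lt_irrefl _ key


/-- Lemma 4.5: every root of the head equation of valuation 2 extends to a solution of
(E_A) all of whose terms have valuation 2. -/
theorem EA_solution_over_ord_two_root
    {K : Type*} [Field K] [IsAlgClosed K] [CharP K 2]
    (ord : K → WithTop ℚ)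
    (hord_top : ∀ z : K, ord z = ⊤ ↔ z = 0)
    (hord_mul : ∀ z w : K, ord (z * w) = ord z + ord w)
    (hord_add : ∀ z w : K, min (ord z) (ord w) ≤ ord (z + w))
    (hord_surj : Function.Surjective ord)
    (θ : K) (hθ : ord θ = ((-1 : ℚ) : WithTop ℚ)) :
    ∀ x₀ : K, ord x₀ = ((2 : ℚ) : WithTop ℚ) →
      θ ^ 20 * x₀ ^ 16 + θ ^ 16 * x₀ ^ 8 + θ ^ 4 * x₀ ^ 4 + θ ^ 3 * x₀ ^ 2 + θ ^ 2 * x₀ = 0 →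
      ∃ x : ℕ → K, IsSolEA θ x ∧ x 0 = x₀ ∧
        ∀ i : ℕ, ord (x i) = ((2 : ℚ) : WithTop ℚ) := by
  intro x₀ hx₀ hhead
  have hone : ord 1 = 0 := by
    have h := hord_mul 1 1
    have hne : ord 1 ≠ ⊤ := fun h => one_ne_zero ((hord_top 1).mp h)
    obtain ⟨r, hr⟩ := WithTop.ne_top_iff_exists.mp hne
    rw [mul_one, ← hr, ← WithTop.coe_add, WithTop.coe_inj] at h
    rw [← hr, ← WithTop.coe_zero, WithTop.coe_inj]
    linarith
  obtain ⟨v, hv⟩ : ∃ v : AddValuation K (WithTop ℚ), ∀ z, v z = ord z :=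
    ⟨AddValuation.of ord ((hord_top 0).mpr rfl) hone hord_add hord_mul, fun _ => rfl⟩
  simp only [← hv] at hθ hx₀ ⊢
  have step : ∀ a b : K, ∃ y : K, v a = ((2 : ℚ) : WithTop ℚ) →
      (b = 0 ∨ v b = ((2 : ℚ) : WithTop ℚ)) →
      θ ^ 20 * y ^ 16 + θ ^ 16 * y ^ 8 + θ ^ 4 * y ^ 4 + θ ^ 3 * y ^ 2 + θ ^ 2 * y
        + ((θ ^ 16 + θ ^ 12) * a ^ 16 + θ ^ 12 * a ^ 8 + (θ ^ 8 + θ ^ 2) * a ^ 4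
          + θ ^ 8 * b ^ 16) = 0 ∧ v y = ((2 : ℚ) : WithTop ℚ) := by
    intro a b
    by_cases h : v a = ((2 : ℚ) : WithTop ℚ) ∧ (b = 0 ∨ v b = ((2 : ℚ) : WithTop ℚ))
    · obtain ⟨y, hy⟩ := exists_root_ord_two v hθ (ord_tail v hθ h.1 h.2)
      exact ⟨y, fun _ _ => hy⟩
    · exact ⟨0, fun h1 h2 => absurd ⟨h1, h2⟩ h⟩
  choose g hg using step
  -- the recursion runs on pairs (current entry, previous entry), the entry before `x₀` being `0`
  let p : ℕ → K × K := fun n => Nat.rec (x₀, 0) (fun _ q => (g q.1 q.2, q.1)) n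
  have hp : ∀ n, v (p n).1 = ((2 : ℚ) : WithTop ℚ) ∧
      ((p n).2 = 0 ∨ v (p n).2 = ((2 : ℚ) : WithTop ℚ)) := by
    intro n
    induction n with
    | zero => exact ⟨hx₀, Or.inl rfl⟩
    | succ n ih => exact ⟨(hg _ _ ih.1 ih.2).2, Or.inr ih.1⟩
  have hprev : ∀ n : ℕ, extSeq (fun n => (p n).1) ((n : ℤ) - 1) = (p n).2 := by
    intro n
    cases n with
    | zero => rfl
    | succ n =>
      have : ((n + 1 : ℕ) : ℤ) - 1 = (n : ℤ) := by push_cast; ring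
      rw [this]
      simp only [extSeq, Int.natCast_nonneg, if_true, Int.toNat_natCast]
      rfl
  refine ⟨fun n => (p n).1, ?_, rfl, fun n => (hp n).1⟩
  intro i
  cases i with
  | zero =>
    have h2 : extSeq (fun n => (p n).1) (((0 : ℕ) : ℤ) - 2) = 0 := rfl
    rw [hprev, h2]
    have h1 : (p 0).2 = 0 := rfl
    have h0 : (p 0).1 = x₀ := rfl
    simp only [h0, h1]
    linear_combination hhead
  | succ n =>
    have h2 : ((n + 1 : ℕ) : ℤ) - 2 = (n : ℤ) - 1 := by push_cast; ring
    rw [hprev, h2, hprev]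
    have h1 : (p (n + 1)).2 = (p n).1 := rfl
    have h0 : (p (n + 1)).1 = g (p n).1 (p n).2 := rfl
    simp only [h0, h1]
    linear_combination (hg _ _ (hp n).1 (hp n).2).1
end

section
/- The equation (E_{A^t}) has a solution (x_0, x_1, x_2, ...) with ord(x_n) = 4^n for every n ≥ 0. (Lemma 4.8) -/
/-- A solution of the affine equation (E_{Aᵗ}) of the t-motive `M(Aᵗ)`,
`Aᵗ = [[θ, θ⁻²],[θ⁶, 0]]`, `q = 2`. -/
def IsSolEAt {K : Type*} [Field K] (θ : K) (x : ℕ → K) : Prop :=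
  ∀ i : ℕ,
    θ ^ (-12 : ℤ) * x i ^ 16 + θ ^ (-16 : ℤ) * x i ^ 8 + θ ^ (-20 : ℤ) * x i ^ 4
      + θ ^ (-5 : ℤ) * x i ^ 2 + θ ^ (-6 : ℤ) * x i
      + (θ ^ (-16 : ℤ) + θ ^ (-20 : ℤ)) * extSeq x ((i : ℤ) - 1) ^ 16
      + θ ^ (-20 : ℤ) * extSeq x ((i : ℤ) - 1) ^ 8
      + (θ ^ (-6 : ℤ) + θ ^ (-24 : ℤ)) * extSeq x ((i : ℤ) - 1) ^ 4
      + θ ^ (-24 : ℤ) * extSeq x ((i : ℤ) - 2) ^ 16 = 0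

open Polynomial

/-- Half of the first Newton polygon segment: if `v (coeff 0) = t + v (coeff 1)`, then some root has
valuation at least `t`; otherwise every summand of `P'(0) / P(0) = ∑ 1 / (0 - r)` would have
valuation greater than `-t`. -/
lemma exists_root_le {K : Type*} [Field K] [IsAlgClosed K] (v : AddValuation K (WithTop ℚ))
    (P : K[X]) (t c₀ c₁ : ℚ) (h0 : v (P.coeff 0) = (c₀ : WithTop ℚ))
    (h1 : v (P.coeff 1) = (c₁ : WithTop ℚ)) (hc : c₀ = t + c₁) :
    ∃ r : K, P.eval r = 0 ∧ (t : WithTop ℚ) ≤ v r := by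
  by_contra! hcon
  have hP0 : P.eval 0 ≠ 0 := by
    intro h
    rw [← coeff_zero_eq_eval_zero] at h
    rw [h, v.map_zero] at h0
    exact WithTop.top_ne_coe h0
  have key := (IsAlgClosed.splits P).eval_derivative_div_eval_of_ne_zero hP0
  have hsum : ∀ s : Multiset K, (∀ z ∈ s, P.eval z = 0) →
      ((-t : ℚ) : WithTop ℚ) < v ((s.map fun z ↦ 1 / (0 - z)).sum) := by
    intro s
    induction s using Multiset.induction with
    | empty =>
      intro _
      rw [Multiset.map_zero, Multiset.sum_zero, v.map_zero]
      exact WithTop.coe_lt_top _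
    | cons z s ih =>
      intro hs
      rw [Multiset.map_cons, Multiset.sum_cons]
      refine v.map_lt_add ?_ (ih fun y hy ↦ hs y (Multiset.mem_cons_of_mem hy))
      have hz := hs z (Multiset.mem_cons_self z s)
      have hz0 : z ≠ 0 := by rintro rfl; exact hP0 hz
      have hlt := hcon z hz
      have hmul : v (1 / (0 - z)) + v z = 0 := by
        rw [← v.map_mul, ← v.map_one, ← v.map_neg]
        congr 1
        field_simp
        ring
      generalize v (1 / (0 - z)) = a at hmul ⊢
      generalize v z = b at hmul hlt
      induction b using WithTop.recTopCoe with
      | top => simp at hlt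
      | coe b =>
        induction a using WithTop.recTopCoe with
        | top => exact WithTop.coe_lt_top _
        | coe a =>
          norm_cast at *
          linarith
  have hlt := hsum P.roots fun z hz ↦ (mem_roots'.1 hz).2
  rw [← key, ← coeff_zero_eq_eval_zero, ← coeff_zero_eq_eval_zero, coeff_derivative] at hlt
  have hmul : v ((P.coeff 1 * 1) / P.coeff 0) + v (P.coeff 0) = v (P.coeff 1) := by
    rw [← v.map_mul, mul_one, div_mul_cancel₀]
    rwa [coeff_zero_eq_eval_zero]
  simp only [zero_add, Nat.cast_zero] at hlt
  rw [h0, h1] at hmul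
  generalize v ((P.coeff 1 * 1) / P.coeff 0) = a at hmul hlt
  induction a using WithTop.recTopCoe with
  | top => simp at hmul
  | coe a =>
    norm_cast at *
    linarith

section Terms

variable {K : Type*} [Field K] (v : AddValuation K (WithTop ℚ)) {θ : K}

lemma val_zpow (hθ : v θ = ((-1 : ℚ) : WithTop ℚ)) (n : ℤ) :
    v (θ ^ n) = ((-n : ℚ) : WithTop ℚ) := by
  have hθ0 : θ ≠ 0 := by
    rintro rfl
    rw [v.map_zero] at hθ
    exact WithTop.top_ne_coe hθ
  have hnat : ∀ k : ℕ, v (θ ^ k) = ((-k : ℚ) : WithTop ℚ) := by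
    intro k
    rw [v.map_pow, hθ, ← WithTop.coe_nsmul]
    simp
  obtain ⟨k, rfl | rfl⟩ := n.eq_nat_or_neg
  · simpa using hnat k
  · have h : v (θ ^ (-(k : ℤ))) + v (θ ^ k) = 0 := by
      rw [← v.map_mul, zpow_neg, zpow_natCast, inv_mul_cancel₀ (pow_ne_zero _ hθ0), v.map_one]
    rw [hnat] at h
    generalize v (θ ^ (-(k : ℤ))) = a at h ⊢
    induction a using WithTop.recTopCoe with
    | top => simp at h
    | coe a =>
      norm_cast at *
      push_cast at *
      linarith

lemma val_term (hθ : v θ = ((-1 : ℚ) : WithTop ℚ)) (n : ℤ) (m : ℕ) {x : K} {s w : ℚ}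
    (hx : v x = (s : WithTop ℚ)) (hw : w = -n + m * s) :
    v (θ ^ n * x ^ m) = (w : WithTop ℚ) := by
  rw [v.map_mul, v.map_pow, hx, val_zpow v hθ, ← WithTop.coe_nsmul, ← WithTop.coe_add, hw]
  simp

lemma lt_val_term (hθ : v θ = ((-1 : ℚ) : WithTop ℚ)) (n : ℤ) (m : ℕ) {x : K} {s w : ℚ}
    (hx : (s : WithTop ℚ) ≤ v x) (hw : w < -n + m * s) :
    (w : WithTop ℚ) < v (θ ^ n * x ^ m) := by
  rw [v.map_mul, v.map_pow, val_zpow v hθ]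
  calc (w : WithTop ℚ) < ((-n + m * s : ℚ) : WithTop ℚ) := by exact_mod_cast hw
    _ = ((-n : ℚ) : WithTop ℚ) + m • (s : WithTop ℚ) := by
      rw [← WithTop.coe_nsmul, ← WithTop.coe_add]; simp
    _ ≤ _ := by gcongr

/-- In a vanishing sum, a term `B` dominating the remainder `H` has the valuation of the other
term. -/
lemma val_eq_of_add_eq_zero {A B H : K} {α β : ℚ} (hA : v A = (α : WithTop ℚ))
    (hB : v B = (β : WithTop ℚ)) (hH : (β : WithTop ℚ) < v H) (h : A + (B + H) = 0) : α = β := by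
  have h1 : v (B + H) = v B := v.map_add_eq_of_lt_left (hB ▸ hH)
  rw [eq_neg_of_add_eq_zero_left h, v.map_neg, h1, hB] at hA
  exact (WithTop.coe_injective hA).symm

lemma exists_initial [IsAlgClosed K] (hθ : v θ = ((-1 : ℚ) : WithTop ℚ)) :
    ∃ r : K, θ ^ (-12 : ℤ) * r ^ 16 + θ ^ (-16 : ℤ) * r ^ 8 + θ ^ (-20 : ℤ) * r ^ 4
      + θ ^ (-5 : ℤ) * r ^ 2 + θ ^ (-6 : ℤ) * r = 0 ∧ v r = ((1 : ℚ) : WithTop ℚ) := by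
  obtain ⟨r, hr, hle⟩ := exists_root_le v
    (C (θ ^ (-12 : ℤ)) * X ^ 15 + C (θ ^ (-16 : ℤ)) * X ^ 7 + C (θ ^ (-20 : ℤ)) * X ^ 3
      + C (θ ^ (-5 : ℤ)) * X + C (θ ^ (-6 : ℤ))) 1 6 5
    (by simp [-zpow_neg, val_zpow v hθ])
    (by simp [-zpow_neg, val_zpow v hθ, coeff_X_pow, coeff_C]) (by norm_num)
  simp only [eval_add, eval_mul, eval_C, eval_pow, eval_X] at hr
  refine ⟨r, by linear_combination r * hr, ?_⟩
  have h6 : v (θ ^ (-6 : ℤ)) = ((6 : ℚ) : WithTop ℚ) := by rw [val_zpow v hθ]; norm_num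
  have hr0 : r ≠ 0 := by
    rintro rfl
    simp only [ne_eq, OfNat.ofNat_ne_zero, not_false_eq_true, zero_pow, mul_zero, zero_add] at hr
    rw [hr, v.map_zero] at h6
    exact WithTop.top_ne_coe h6
  obtain ⟨s, hs⟩ := WithTop.ne_top_iff_exists.1 (v.ne_top_iff.2 hr0)
  have h1s : (1 : ℚ) ≤ s := by rw [← hs] at hle; exact_mod_cast hle
  have := val_eq_of_add_eq_zero v (A := θ ^ (-6 : ℤ)) (B := θ ^ (-5 : ℤ) * r ^ 1)
    (H := θ ^ (-12 : ℤ) * r ^ 15 + θ ^ (-16 : ℤ) * r ^ 7 + θ ^ (-20 : ℤ) * r ^ 3) h6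
    (val_term v hθ (-5) 1 hs.symm rfl)
    (by
      refine v.map_lt_add (v.map_lt_add ?_ ?_) ?_ <;>
      · refine lt_val_term v hθ _ _ hs.le ?_
        push_cast
        linarith)
    (by linear_combination hr)
  push_cast at this
  rw [← hs]
  congr 1
  linarith

/-- The inductive step, with `b`, `a` in the roles of `x (n-1)`, `x (n-2)` and `u = 4 ^ (n-1)`. Only
a lower bound on `v a` is required, which allows `a = 0` when `n = 1`. -/
lemma exists_next [IsAlgClosed K] (hθ : v θ = ((-1 : ℚ) : WithTop ℚ)) (u : ℚ) (hu : 1 ≤ u)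
    (a b : K) (hb : v b = (u : WithTop ℚ)) (ha : ((u / 4 : ℚ) : WithTop ℚ) ≤ v a) :
    ∃ r : K, θ ^ (-12 : ℤ) * r ^ 16 + θ ^ (-16 : ℤ) * r ^ 8 + θ ^ (-20 : ℤ) * r ^ 4
      + θ ^ (-5 : ℤ) * r ^ 2 + θ ^ (-6 : ℤ) * r
      + (θ ^ (-16 : ℤ) + θ ^ (-20 : ℤ)) * b ^ 16
      + θ ^ (-20 : ℤ) * b ^ 8
      + (θ ^ (-6 : ℤ) + θ ^ (-24 : ℤ)) * b ^ 4
      + θ ^ (-24 : ℤ) * a ^ 16 = 0 ∧ v r = ((4 * u : ℚ) : WithTop ℚ) := by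
  obtain ⟨c, hc⟩ : ∃ c, c = θ ^ (-6 : ℤ) * b ^ 4 + (θ ^ (-16 : ℤ) * b ^ 16
      + θ ^ (-20 : ℤ) * b ^ 16 + θ ^ (-20 : ℤ) * b ^ 8 + θ ^ (-24 : ℤ) * b ^ 4
      + θ ^ (-24 : ℤ) * a ^ 16) := ⟨_, rfl⟩
  have hvc : v c = ((6 + 4 * u : ℚ) : WithTop ℚ) := by
    have h4 : v (θ ^ (-6 : ℤ) * b ^ 4) = ((6 + 4 * u : ℚ) : WithTop ℚ) :=
      val_term v hθ _ _ hb (by push_cast; ring)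
    rw [hc, v.map_add_eq_of_lt_left, h4]
    rw [h4]
    refine v.map_lt_add (v.map_lt_add (v.map_lt_add (v.map_lt_add ?_ ?_) ?_) ?_) ?_
    on_goal 5 => refine lt_val_term v hθ _ _ ha ?_
    on_goal 1 => refine lt_val_term v hθ _ _ hb.ge ?_
    on_goal 2 => refine lt_val_term v hθ _ _ hb.ge ?_
    on_goal 3 => refine lt_val_term v hθ _ _ hb.ge ?_
    on_goal 4 => refine lt_val_term v hθ _ _ hb.ge ?_
    all_goals
      push_cast
      linarith
  obtain ⟨r, hr, hle⟩ := exists_root_le v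
    (C (θ ^ (-12 : ℤ)) * X ^ 16 + C (θ ^ (-16 : ℤ)) * X ^ 8 + C (θ ^ (-20 : ℤ)) * X ^ 4
      + C (θ ^ (-5 : ℤ)) * X ^ 2 + C (θ ^ (-6 : ℤ)) * X + C c) (4 * u) (6 + 4 * u) 6
    (by simpa [-zpow_neg] using hvc)
    (by simp [-zpow_neg, val_zpow v hθ, coeff_X_pow, coeff_C]) (by ring)
  simp only [eval_add, eval_mul, eval_C, eval_pow, eval_X] at hr
  refine ⟨r, by linear_combination hr - hc, ?_⟩
  have hr0 : r ≠ 0 := by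
    rintro rfl
    simp only [ne_eq, OfNat.ofNat_ne_zero, not_false_eq_true, zero_pow, mul_zero, zero_add] at hr
    rw [hr, v.map_zero] at hvc
    exact WithTop.top_ne_coe hvc
  obtain ⟨s, hs⟩ := WithTop.ne_top_iff_exists.1 (v.ne_top_iff.2 hr0)
  have hus : 4 * u ≤ s := by rw [← hs] at hle; exact_mod_cast hle
  have := val_eq_of_add_eq_zero v (A := c) (B := θ ^ (-6 : ℤ) * r ^ 1)
    (H := θ ^ (-12 : ℤ) * r ^ 16 + θ ^ (-16 : ℤ) * r ^ 8 + θ ^ (-20 : ℤ) * r ^ 4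
      + θ ^ (-5 : ℤ) * r ^ 2) hvc
    (val_term v hθ (-6) 1 hs.symm rfl)
    (by
      refine v.map_lt_add (v.map_lt_add (v.map_lt_add ?_ ?_) ?_) ?_ <;>
      · refine lt_val_term v hθ _ _ hs.le ?_
        push_cast
        linarith)
    (by linear_combination hr)
  push_cast at this
  rw [← hs]
  congr 1
  linarith

end Terms

/-- Lemma 4.8: equation (E_{Aᵗ}) has a solution with `ord (x n) = 4^n`. -/
theorem EAt_has_solution_with_ord
    {K : Type*} [Field K] [IsAlgClosed K] [CharP K 2]
    (ord : K → WithTop ℚ)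
    (hord_top : ∀ z : K, ord z = ⊤ ↔ z = 0)
    (hord_mul : ∀ z w : K, ord (z * w) = ord z + ord w)
    (hord_add : ∀ z w : K, min (ord z) (ord w) ≤ ord (z + w))
    (hord_surj : Function.Surjective ord)
    (θ : K) (hθ : ord θ = ((-1 : ℚ) : WithTop ℚ)) :
    ∃ x : ℕ → K, IsSolEAt θ x ∧
      ∀ n : ℕ, ord (x n) = (((4 : ℚ) ^ n) : WithTop ℚ) := by
  have h1 : ord 1 = 0 := by
    have h := hord_mul 1 1
    rw [mul_one] at h
    have h_top : ord 1 ≠ ⊤ := fun e ↦ one_ne_zero ((hord_top 1).1 e)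
    generalize ord 1 = a at h h_top
    induction a using WithTop.recTopCoe with
    | top => exact absurd rfl h_top
    | coe a =>
      norm_cast at *
      linarith
  let v : AddValuation K (WithTop ℚ) :=
    AddValuation.of ord ((hord_top 0).2 rfl) h1 hord_add hord_mul
  have hvθ : v θ = ((-1 : ℚ) : WithTop ℚ) := hθ
  obtain ⟨x₀, hx₀, hv₀⟩ := exists_initial v hvθ
  choose! g hg hvg using exists_next v hvθ
  -- The state after `n` steps is the pair `(x (n-1), x n)`.
  let p : ℕ → K × K := fun n ↦
    Nat.rec (0, x₀) (fun n p ↦ (p.2, g ((4 : ℚ) ^ n) p.1 p.2)) n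
  have hp0 : p 0 = (0, x₀) := rfl
  have hps : ∀ n, p (n + 1) = ((p n).2, g ((4 : ℚ) ^ n) (p n).1 (p n).2) := fun n ↦ rfl
  have hone : ∀ n : ℕ, (1 : ℚ) ≤ 4 ^ n := fun n ↦ one_le_pow₀ (by norm_num)
  have hinv : ∀ n, v (p n).2 = (((4 : ℚ) ^ n : ℚ) : WithTop ℚ) ∧
      (((4 : ℚ) ^ n / 4 : ℚ) : WithTop ℚ) ≤ v (p n).1 := by
    intro n
    induction n with
    | zero =>
      rw [hp0]
      exact ⟨by simpa using hv₀, by rw [v.map_zero]; exact le_top⟩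
    | succ n ih =>
      rw [hps]
      refine ⟨?_, ?_⟩
      · rw [hvg _ (hone n) _ _ ih.1 ih.2, pow_succ, mul_comm]
      · rw [ih.1]
        rw [WithTop.coe_le_coe, pow_succ]
        linarith
  have hext : ∀ n : ℕ, extSeq (fun n ↦ (p n).2) ((n : ℤ) - 1) = (p n).1 := by
    intro n
    cases n with
    | zero => simp [extSeq, hp0]
    | succ n => simp [extSeq, hps]
  refine ⟨fun n ↦ (p n).2, ?_, fun n ↦ ((hinv n).1 : ord (p n).2 = _)⟩
  intro i
  cases i with
  | zero => simpa [extSeq, hp0] using hx₀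
  | succ n =>
    have e1 : (((n + 1 : ℕ) : ℤ) - 2) = (n : ℤ) - 1 := by push_cast; ring
    rw [hext, e1, hext]
    simp only [hps]
    exact hg _ (hone n) _ _ (hinv n).1 (hinv n).2
end

section
/- Every solution (x_0, x_1, x_2, ...) of equation (E_{A^t}) with ord(x_0) = −1/2 satisfies ord(x_i) = −1/2 for every i ≥ 0. (Lemma 4.9) -/
section Orders

variable {K : Type*} [Field K] (v : AddValuation K (WithTop ℚ))

lemma ord_zpow {θ : K} (hθ : v θ = ((-1 : ℚ) : WithTop ℚ)) (n : ℕ) :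
    v (θ ^ (-(n : ℤ))) = ((n : ℚ) : WithTop ℚ) := by
  have hθ0 : θ ≠ 0 := by
    rintro rfl
    rw [AddValuation.map_zero] at hθ
    exact WithTop.coe_ne_top hθ.symm
  have hp : v (θ ^ n) = ((-(n : ℚ) : ℚ) : WithTop ℚ) := by
    rw [AddValuation.map_pow, hθ, ← WithTop.coe_nsmul]
    simp
  have h1 : v (θ ^ (-(n : ℤ))) + v (θ ^ n) = 0 := by
    rw [← AddValuation.map_mul, zpow_neg, zpow_natCast, inv_mul_cancel₀ (pow_ne_zero n hθ0),
      AddValuation.map_one]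
  rw [hp] at h1
  cases h : v (θ ^ (-(n : ℤ))) with
  | top =>
    rw [h, top_add] at h1
    exact absurd h1 WithTop.top_ne_zero
  | coe a =>
    rw [h, ← WithTop.coe_add] at h1
    have h2 : a + -(n : ℚ) = 0 := WithTop.coe_eq_zero.mp h1
    rw [show a = n by linarith]

lemma ord_term {c z : K} {α β : ℚ} (hc : v c = (α : WithTop ℚ)) (hz : v z = (β : WithTop ℚ))
    (n : ℕ) : v (c * z ^ n) = ((α + n * β : ℚ) : WithTop ℚ) := by
  rw [AddValuation.map_mul, AddValuation.map_pow, hc, hz, ← WithTop.coe_nsmul, ← WithTop.coe_add,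
    nsmul_eq_mul]

lemma lt_ord_term {c z : K} {α r b : ℚ} (hc : v c = (α : WithTop ℚ)) (hz : (r : WithTop ℚ) < v z)
    {n : ℕ} (hn : n ≠ 0) (hb : b ≤ α + n * r) : (b : WithTop ℚ) < v (c * z ^ n) := by
  cases h : v z with
  | top =>
    rw [AddValuation.top_iff] at h
    simp [h, hn]
  | coe β =>
    rw [ord_term v hc h]
    rw [h] at hz
    norm_cast at hz ⊢
    have : (n : ℚ) * r < n * β := mul_lt_mul_of_pos_left hz (by positivity)
    linarith

lemma lt_ord_term_of_le {c z : K} {α r b : ℚ} (hc : v c = (α : WithTop ℚ))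
    (hz : (r : WithTop ℚ) ≤ v z) {n : ℕ} (hn : n ≠ 0) (hb : b < α + n * r) :
    (b : WithTop ℚ) < v (c * z ^ n) := by
  cases h : v z with
  | top =>
    rw [AddValuation.top_iff] at h
    simp [h, hn]
  | coe β =>
    rw [ord_term v hc h]
    rw [h] at hz
    norm_cast at hz ⊢
    have : (n : ℚ) * r ≤ n * β := mul_le_mul_of_nonneg_left hz (by positivity)
    linarith

/-- The Newton polygon argument: one instance of the equation, with `z`, `y`, `w` in the roles of
`x_i`, `x_{i-1}`, `x_{i-2}`. Only a lower bound on `ord w` is needed, so that `w = 0` is allowed. -/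
lemma ord_step {θ : K} (hθ : v θ = ((-1 : ℚ) : WithTop ℚ)) {z y w : K}
    (hy : v y = ((-(1 / 2) : ℚ) : WithTop ℚ)) (hw : ((-(1 / 2) : ℚ) : WithTop ℚ) ≤ v w)
    (h : θ ^ (-12 : ℤ) * z ^ 16 + θ ^ (-16 : ℤ) * z ^ 8 + θ ^ (-20 : ℤ) * z ^ 4
      + θ ^ (-5 : ℤ) * z ^ 2 + θ ^ (-6 : ℤ) * z
      + (θ ^ (-16 : ℤ) + θ ^ (-20 : ℤ)) * y ^ 16
      + θ ^ (-20 : ℤ) * y ^ 8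
      + (θ ^ (-6 : ℤ) + θ ^ (-24 : ℤ)) * y ^ 4
      + θ ^ (-24 : ℤ) * w ^ 16 = 0) :
    v z = ((-(1 / 2) : ℚ) : WithTop ℚ) := by
  have o5 := ord_zpow v hθ 5
  have o6 := ord_zpow v hθ 6
  have o12 := ord_zpow v hθ 12
  have o16 := ord_zpow v hθ 16
  have o20 := ord_zpow v hθ 20
  have o24 := ord_zpow v hθ 24
  push_cast at o5 o6 o12 o16 o20 o24
  have y16 := lt_ord_term_of_le v (b := 4) o16 hy.ge (n := 16) (by norm_num) (by norm_num)
  have y20 := lt_ord_term_of_le v (b := 4) o20 hy.ge (n := 16) (by norm_num) (by norm_num)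
  have y8 := lt_ord_term_of_le v (b := 4) o20 hy.ge (n := 8) (by norm_num) (by norm_num)
  have y4 := lt_ord_term_of_le v (b := 4) o24 hy.ge (n := 4) (by norm_num) (by norm_num)
  have w16 := lt_ord_term_of_le v (b := 4) o24 hw (n := 16) (by norm_num) (by norm_num)
  have yd := ord_term v o6 hy 4
  have hrest := v.map_lt_add (v.map_lt_add (v.map_lt_add (v.map_lt_add y16 y20) y8) y4) w16
  rcases lt_trichotomy (v z) ((-(1 / 2) : ℚ) : WithTop ℚ) with hlt | heq | hgt
  · exfalso
    obtain ⟨β, hβ⟩ := WithTop.ne_top_iff_exists.mp hlt.ne_top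
    rw [← hβ] at hlt
    have hβ' : β < -(1 / 2) := WithTop.coe_lt_coe.mp hlt
    have zd := ord_term v o12 hβ.symm 16
    have z8 := lt_ord_term_of_le v (b := 12 + 16 * β) o16 hβ.le (n := 8) (by norm_num)
      (by push_cast; linarith)
    have z4 := lt_ord_term_of_le v (b := 12 + 16 * β) o20 hβ.le (n := 4) (by norm_num)
      (by push_cast; linarith)
    have z2 := lt_ord_term_of_le v (b := 12 + 16 * β) o5 hβ.le (n := 2) (by norm_num)
      (by push_cast; linarith)
    have z1 := lt_ord_term_of_le v (b := 12 + 16 * β) o6 hβ.le (n := 1) (by norm_num)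
      (by push_cast; linarith)
    have b4 : ((12 + 16 * β : ℚ) : WithTop ℚ) < ((4 : ℚ) : WithTop ℚ) :=
      WithTop.coe_lt_coe.mpr (by linarith)
    have yd' : ((12 + 16 * β : ℚ) : WithTop ℚ) < v (θ ^ (-6 : ℤ) * y ^ 4) := by
      have e : (6 + ((4 : ℕ) : ℚ) * -(1 / 2) : ℚ) = 4 := by norm_num
      rw [e] at yd
      exact b4.trans_eq yd.symm
    have key := v.map_lt_add (v.map_lt_add (v.map_lt_add (v.map_lt_add (v.map_lt_add z8 z4) z2) z1)
      yd') (b4.trans hrest)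
    rw [← v.map_neg] at key
    refine absurd zd (ne_of_gt (lt_of_lt_of_eq key (congrArg v ?_)))
    linear_combination -h
  · exact heq
  · exfalso
    have z16 := lt_ord_term v (b := 4) o12 hgt (n := 16) (by norm_num) (by norm_num)
    have z8 := lt_ord_term v (b := 4) o16 hgt (n := 8) (by norm_num) (by norm_num)
    have z4 := lt_ord_term v (b := 4) o20 hgt (n := 4) (by norm_num) (by norm_num)
    have z2 := lt_ord_term v (b := 4) o5 hgt (n := 2) (by norm_num) (by norm_num)
    have z1 := lt_ord_term v (b := 4) o6 hgt (n := 1) (by norm_num) (by norm_num)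
    have key := v.map_lt_add (v.map_lt_add (v.map_lt_add (v.map_lt_add (v.map_lt_add z16 z8) z4)
      z2) z1) hrest
    rw [← v.map_neg] at key
    have e : (6 + ((4 : ℕ) : ℚ) * -(1 / 2) : ℚ) = 4 := by norm_num
    rw [e] at yd
    refine absurd yd (ne_of_gt (lt_of_lt_of_eq key (congrArg v ?_)))
    linear_combination -h

end Orders

/-- Lemma 4.9: every solution of (E_{Aᵗ}) with `ord (x 0) = -1/2` has
`ord (x i) = -1/2` for all `i`. -/
theorem EAt_solution_constant_ord
    {K : Type*} [Field K] [IsAlgClosed K] [CharP K 2]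
    (ord : K → WithTop ℚ)
    (hord_top : ∀ z : K, ord z = ⊤ ↔ z = 0)
    (hord_mul : ∀ z w : K, ord (z * w) = ord z + ord w)
    (hord_add : ∀ z w : K, min (ord z) (ord w) ≤ ord (z + w))
    (hord_surj : Function.Surjective ord)
    (θ : K) (hθ : ord θ = ((-1 : ℚ) : WithTop ℚ)) :
    ∀ x : ℕ → K, IsSolEAt θ x → ord (x 0) = ((-(1 / 2) : ℚ) : WithTop ℚ) →
      ∀ i : ℕ, ord (x i) = ((-(1 / 2) : ℚ) : WithTop ℚ) := by
  have h0 : ord 0 = ⊤ := (hord_top 0).mpr rfl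
  have h1 : ord 1 = 0 := by
    have hm := hord_mul 1 1
    rw [mul_one] at hm
    cases h : ord 1 with
    | top => exact absurd ((hord_top 1).mp h) one_ne_zero
    | coe a =>
      rw [h] at hm
      norm_cast at hm ⊢
      linarith
  let v : AddValuation K (WithTop ℚ) := AddValuation.of ord h0 h1 hord_add hord_mul
  intro x hx hx0 i
  induction i using Nat.strong_induction_on with
  | _ i ih =>
    match i, ih with
    | 0, _ => exact hx0
    | 1, _ =>
      have h := hx 1
      have e1 : extSeq x (((1 : ℕ) : ℤ) - 1) = x 0 := by simp [extSeq]
      have e2 : extSeq x (((1 : ℕ) : ℤ) - 2) = 0 := by simp [extSeq]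
      rw [e1, e2] at h
      exact ord_step v hθ hx0 (by rw [v.map_zero]; exact le_top) h
    | j + 2, ih =>
      have h := hx (j + 2)
      have e1 : extSeq x (((j + 2 : ℕ) : ℤ) - 1) = x (j + 1) := by
        rw [show ((j + 2 : ℕ) : ℤ) - 1 = ((j + 1 : ℕ) : ℤ) by push_cast; ring]
        simp only [extSeq, Int.natCast_nonneg, if_true, Int.toNat_natCast]
      have e2 : extSeq x (((j + 2 : ℕ) : ℤ) - 2) = x j := by
        rw [show ((j + 2 : ℕ) : ℤ) - 2 = (j : ℤ) by push_cast; ring]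
        simp only [extSeq, Int.natCast_nonneg, if_true, Int.toNat_natCast]
      rw [e1, e2] at h
      exact ord_step v hθ (ih (j + 1) (by lia)) (ih j (by lia)).ge h
end

section
/- Set a_4 = θ^{q^3+q^2}/a_{21}^{q^2}, a_3 = −1, a_0 = 1/a_{21}, b_{14} = −(θ^{q^3}+θ^{q^2})/a_{21}^{q^2}, b_{12} = 1/a_{21} + 1/a_{21}^{q^2}, b_{24} = 1/a_{21}^{q^2} (the coefficients of the affine equation of the t-motive M_1 = M(A, N_0)). Let i ≥ 1 and let u, w ∈ K satisfy ord(u) ≥ (1/2)·q^{2(i−2)} and ord(w) ≥ (1/2)·q^{2(i−1)}. Then there exists y ∈ K with a_4 y^{q^4} + a_3 y^{q^3} + a_0 y + b_{14} w^{q^4} + b_{12} w^{q^2} + b_{24} u^{q^4} = 0 and ord(y) ≥ (1/2)·q^{2i}. (Lemma 5.2, the induction step in the proof that M_1 is uniformizable) -/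
/-! The equation is `P(y) = 0` for a polynomial `P` whose linear coefficient is `a₀ = 1/a₂₁` and
whose constant term `c` collects the three terms in `u` and `w`. If `r` runs over the roots of a
polynomial `P` with `P(0) ≠ 0`, then `∑ 1/r = -P'(0)/P(0)`, so some root satisfies
`ord (1/r) ≤ ord (a₀/c)`, that is `ord r ≥ ord c - ord a₀`; no further information on the Newton
polygon is needed. This is `exists_root_le_ord`, proved by multiplying out the linear factors one
at a time (`ord_coeff_prod_lt`).

It remains to see that `ord c ≥ ord a₀ + q^{2i}/2`. Put `α = q²/(q-1) = ord a₀`. The coefficients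
satisfy `ord b₁₄ ≥ q⁴/(q-1) - q³ = qα ≥ α`, `ord b₁₂ ≥ α` and `ord b₂₄ = q²α ≥ α`, while
`w^{q⁴}`, `w^{q²}` and `u^{q⁴}` all have order at least `q^{2i}/2`. -/

open Polynomial in
/-- If every `r ∈ s` has order less than `t`, then `∑ 1/r` has order greater than `-t`. For
`∏ (X - r)` this reads `ord (coeff 0) < ord (coeff 1) + t`, a form which involves no division and
which passes from `s` to `r ::ₘ s`. -/
theorem ord_coeff_prod_lt {K : Type*} [Field K] (v : AddValuation K (WithTop ℚ)) (t : ℚ)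
    (s : Multiset K) (hs : ∀ r ∈ s, v r < (t : WithTop ℚ)) :
    v ((s.map fun r => X - C r).prod.coeff 0) <
      v ((s.map fun r => X - C r).prod.coeff 1) + (t : WithTop ℚ) := by
  induction s using Multiset.induction_on with
  | empty => simp [coeff_one]
  | cons r s ih =>
    have ih' := ih fun x hx => hs x (Multiset.mem_cons_of_mem hx)
    have hr := hs r (Multiset.mem_cons_self r s)
    rw [Multiset.map_cons, Multiset.prod_cons]
    generalize (s.map fun r => X - C r).prod = Q at ih'
    have e0 : ((X - C r) * Q).coeff 0 = -(r * Q.coeff 0) := by simp [mul_coeff_zero]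
    have e1 : ((X - C r) * Q).coeff 1 = Q.coeff 0 - r * Q.coeff 1 := by
      rw [sub_mul, coeff_sub, coeff_C_mul]
      simp [coeff_X_mul Q 0]
    have hr' : v r ≠ ⊤ := ne_top_of_lt hr
    have h0 : v (Q.coeff 0) ≠ ⊤ := ne_top_of_lt ih'
    rw [e0, e1, AddValuation.map_neg, AddValuation.map_mul]
    have hmin := v.map_sub (Q.coeff 0) (r * Q.coeff 1)
    refine lt_of_lt_of_le ?_ (add_le_add_left hmin _)
    rw [AddValuation.map_mul, min_add, lt_min_iff]
    constructor
    · rw [add_comm]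
      exact WithTop.add_lt_add_left h0 hr
    · rw [add_assoc]
      exact WithTop.add_lt_add_left hr' ih'

open Polynomial in
/-- The first slope of the Newton polygon of `P` is at most that of the segment joining the
vertices of index `0` and `1`, so `P` has a root of order at least
`ord (P.coeff 0) - ord (P.coeff 1)`. -/
theorem exists_root_le_ord {K : Type*} [Field K] [IsAlgClosed K]
    (v : AddValuation K (WithTop ℚ)) (t : ℚ) (P : K[X]) (h1 : P.coeff 1 ≠ 0)
    (h : v (P.coeff 1) + (t : WithTop ℚ) ≤ v (P.coeff 0)) :
    ∃ y, P.eval y = 0 ∧ (t : WithTop ℚ) ≤ v y := by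
  by_contra! hcon
  have hP : P ≠ 0 := by rintro rfl; simp at h1
  have hs := ord_coeff_prod_lt v t P.roots fun r hr => hcon r (isRoot_of_mem_roots hr)
  have hfac := (IsAlgClosed.splits P).eq_prod_roots
  have hl : v P.leadingCoeff ≠ ⊤ := by
    rw [Ne, v.top_iff]; exact leadingCoeff_ne_zero.mpr hP
  have hc : ∀ n, v (P.coeff n) =
      v P.leadingCoeff + v ((P.roots.map fun r => X - C r).prod.coeff n) := fun n => by
    conv_lhs => rw [hfac, coeff_C_mul, AddValuation.map_mul]
  rw [hc 0, hc 1, add_assoc] at h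
  exact absurd (WithTop.add_lt_add_left hl hs) (not_lt.mpr h)

section OrderBounds

variable {K : Type*} [Field K] (v : AddValuation K (WithTop ℚ))

theorem ord_pow_ge {x : K} {r : ℚ} (h : (r : WithTop ℚ) ≤ v x) (n : ℕ) :
    ((n * r : ℚ) : WithTop ℚ) ≤ v (x ^ n) := by
  rw [AddValuation.map_pow, ← nsmul_eq_mul, WithTop.coe_nsmul]
  exact nsmul_le_nsmul_right h n

theorem ord_mul_ge {x y : K} {r s : ℚ} (hx : (r : WithTop ℚ) ≤ v x)
    (hy : (s : WithTop ℚ) ≤ v y) : ((r + s : ℚ) : WithTop ℚ) ≤ v (x * y) := by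
  rw [AddValuation.map_mul, WithTop.coe_add]
  exact add_le_add hx hy

theorem ord_ge_mono {x : K} {r s : ℚ} (h : (r : WithTop ℚ) ≤ v x) (hs : s ≤ r) :
    (s : WithTop ℚ) ≤ v x :=
  (WithTop.coe_le_coe.mpr hs).trans h

theorem ord_inv_eq {x : K} {r : ℚ} (h : v x = (r : WithTop ℚ)) :
    v x⁻¹ = ((-r : ℚ) : WithTop ℚ) := by
  have hx : x ≠ 0 := by
    rintro rfl
    simp at h
  have h1 : v (x * x⁻¹) = 0 := by rw [mul_inv_cancel₀ hx, AddValuation.map_one]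
  rw [AddValuation.map_mul, h] at h1
  have hne : v x⁻¹ ≠ ⊤ := by
    rw [Ne, v.top_iff]; exact inv_ne_zero hx
  obtain ⟨s, hs⟩ := WithTop.ne_top_iff_exists.mp hne
  rw [← hs] at h1 ⊢
  have h2 : r + s = 0 := by exact_mod_cast h1
  exact_mod_cast (by linarith : s = -r)

end OrderBounds



/-- Lemma 5.2: the induction step in the proof that `M₁` is uniformizable. With
`a₄ = θ^{q³+q²}/a₂₁^{q²}`, `a₃ = -1`, `a₀ = 1/a₂₁`, `b₁₄ = -(θ^{q³}+θ^{q²})/a₂₁^{q²}`,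
`b₁₂ = 1/a₂₁ + 1/a₂₁^{q²}`, `b₂₄ = 1/a₂₁^{q²}`: if `ord u ≥ (1/2)·q^{2(i-2)}` and
`ord w ≥ (1/2)·q^{2(i-1)}`, then there is `y` solving the one-step equation with
`ord y ≥ (1/2)·q^{2i}`. -/
theorem uniformizability_induction_step
    {p : ℕ} (hp : p.Prime) {e : ℕ} (he : 1 ≤ e) {q : ℕ} (hq : q = p ^ e) (hq2 : 2 < q)
    {K : Type*} [Field K] [IsAlgClosed K] [CharP K p]
    (ord : K → WithTop ℚ)
    (hord_top : ∀ z : K, ord z = ⊤ ↔ z = 0)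
    (hord_mul : ∀ z w : K, ord (z * w) = ord z + ord w)
    (hord_add : ∀ z w : K, min (ord z) (ord w) ≤ ord (z + w))
    (hord_surj : Function.Surjective ord)
    (θ : K) (hθ : ord θ = ((-1 : ℚ) : WithTop ℚ))
    (a21 : K) (ha21 : ord a21 = ((-((q : ℚ) ^ 2 / ((q : ℚ) - 1))) : WithTop ℚ))
    (i : ℕ) (hi : 1 ≤ i) (u w : K)
    (hu : ((1 / 2 * (q : ℚ) ^ (2 * ((i : ℤ) - 2)) : ℚ) : WithTop ℚ) ≤ ord u)
    (hw : ((1 / 2 * (q : ℚ) ^ (2 * ((i : ℤ) - 1)) : ℚ) : WithTop ℚ) ≤ ord w) :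
    ∃ y : K,
      (θ ^ (q ^ 3 + q ^ 2) / a21 ^ (q ^ 2)) * y ^ (q ^ 4) + (-1 : K) * y ^ (q ^ 3)
          + (1 / a21) * y
          + (-((θ ^ (q ^ 3) + θ ^ (q ^ 2)) / a21 ^ (q ^ 2))) * w ^ (q ^ 4)
          + (1 / a21 + 1 / a21 ^ (q ^ 2)) * w ^ (q ^ 2)
          + (1 / a21 ^ (q ^ 2)) * u ^ (q ^ 4) = 0 ∧
      ((1 / 2 * (q : ℚ) ^ (2 * (i : ℤ)) : ℚ) : WithTop ℚ) ≤ ord y := by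
  have h0 : ord 0 = ⊤ := (hord_top 0).mpr rfl
  have h1 : ord 1 = 0 := by
    have hne : ord 1 ≠ ⊤ := by rw [Ne, hord_top]; exact one_ne_zero
    obtain ⟨s, hs⟩ := WithTop.ne_top_iff_exists.mp hne
    have h := hord_mul 1 1
    rw [mul_one, ← hs] at h
    have h2 : s = s + s := by exact_mod_cast h
    rw [← hs]
    exact_mod_cast (by linarith : s = 0)
  obtain ⟨v, hv⟩ : ∃ v : AddValuation K (WithTop ℚ), ∀ x, v x = ord x :=
    ⟨AddValuation.of ord h0 h1 hord_add hord_mul, fun x => rfl⟩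
  simp only [← hv] at hθ ha21 hu hw ⊢
  have hq2' : (2 : ℚ) < q := by exact_mod_cast hq2
  have hq0 : (q : ℚ) ≠ 0 := by positivity
  have hq1 : (q : ℚ) - 1 ≠ 0 := by linarith
  set α : ℚ := (q : ℚ) ^ 2 / ((q : ℚ) - 1) with hα
  have hαq : α * ((q : ℚ) - 1) = (q : ℚ) ^ 2 := div_mul_cancel₀ _ hq1
  have hα0 : 0 < α := div_pos (by positivity) (by linarith)
  set t : ℚ := 1 / 2 * (q : ℚ) ^ (2 * (i : ℤ)) with ht
  have ht0 : 0 < t := by positivity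
  have hne : a21 ≠ 0 := by
    rintro rfl
    rw [AddValuation.map_zero] at ha21
    exact WithTop.top_ne_coe ha21
  have hinv : v a21⁻¹ = (α : WithTop ℚ) := by
    rw [ord_inv_eq v ha21, neg_neg]
  have hinvq : ((((q ^ 2 : ℕ) : ℚ) * α : ℚ) : WithTop ℚ) ≤ v (a21 ^ q ^ 2)⁻¹ := by
    rw [← inv_pow]
    exact ord_pow_ge v hinv.ge _
  have hq2α : α ≤ ((q ^ 2 : ℕ) : ℚ) * α := by
    push_cast
    nlinarith [mul_pos hα0 (by nlinarith : (0 : ℚ) < (q : ℚ) ^ 2 - 1)]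
  have hinvq' : (α : WithTop ℚ) ≤ v (a21 ^ q ^ 2)⁻¹ := ord_ge_mono v hinvq hq2α
  -- `q²` times the lower bound on `ord w`, and `q⁴` times the one on `ord u`, both equal `t`.
  have hw2 : (t : WithTop ℚ) ≤ v (w ^ q ^ 2) := by
    refine ord_ge_mono v (ord_pow_ge v hw _) (le_of_eq ?_)
    rw [ht, show 2 * (i : ℤ) = 2 * ((i : ℤ) - 1) + 2 by ring, zpow_add₀ hq0, zpow_ofNat]
    push_cast
    ring
  have hu4 : (t : WithTop ℚ) ≤ v (u ^ q ^ 4) := by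
    refine ord_ge_mono v (ord_pow_ge v hu _) (le_of_eq ?_)
    rw [ht, show 2 * (i : ℤ) = 2 * ((i : ℤ) - 2) + 4 by ring, zpow_add₀ hq0, zpow_ofNat]
    push_cast
    ring
  have hw4 : (t : WithTop ℚ) ≤ v (w ^ q ^ 4) := by
    rw [show q ^ 4 = q ^ 2 * q ^ 2 by ring, pow_mul]
    refine ord_ge_mono v (ord_pow_ge v hw2 _) ?_
    push_cast
    nlinarith [mul_pos ht0 (by nlinarith : (0 : ℚ) < (q : ℚ) ^ 2 - 1)]
  have hb14 : (α : WithTop ℚ) ≤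
      v (-((θ ^ (q ^ 3) + θ ^ (q ^ 2)) / a21 ^ (q ^ 2))) := by
    rw [AddValuation.map_neg, div_eq_mul_inv]
    have hsum : ((-(q : ℚ) ^ 3 : ℚ) : WithTop ℚ) ≤ v (θ ^ (q ^ 3) + θ ^ (q ^ 2)) := by
      refine v.map_le_add (ord_ge_mono v (ord_pow_ge v hθ.ge _) ?_)
        (ord_ge_mono v (ord_pow_ge v hθ.ge _) ?_) <;> push_cast
      · linarith
      · nlinarith [mul_pos (pow_pos (by linarith : (0 : ℚ) < q) 2)
          (by linarith : (0 : ℚ) < (q : ℚ) - 1)]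
    refine ord_ge_mono v (ord_mul_ge v hsum hinvq) ?_
    -- `q²α - q³ = qα`, from `(q - 1)α = q²`.
    have : -(q : ℚ) ^ 3 + ((q ^ 2 : ℕ) : ℚ) * α = q * α := by
      push_cast
      linear_combination (q : ℚ) * hαq
    rw [this]
    nlinarith
  have hb12 : (α : WithTop ℚ) ≤ v (1 / a21 + 1 / a21 ^ (q ^ 2)) := by
    rw [one_div, one_div]
    exact v.map_le_add hinv.ge hinvq'
  have hb24 : (α : WithTop ℚ) ≤ v (1 / a21 ^ (q ^ 2)) := by
    rw [one_div]
    exact hinvq'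
  have hc := v.map_le_add (v.map_le_add (ord_mul_ge v hb14 hw4) (ord_mul_ge v hb12 hw2))
    (ord_mul_ge v hb24 hu4)
  set c : K := (-((θ ^ (q ^ 3) + θ ^ (q ^ 2)) / a21 ^ (q ^ 2))) * w ^ (q ^ 4)
    + (1 / a21 + 1 / a21 ^ (q ^ 2)) * w ^ (q ^ 2) + (1 / a21 ^ (q ^ 2)) * u ^ (q ^ 4) with hcdef
  set a4 : K := θ ^ (q ^ 3 + q ^ 2) / a21 ^ (q ^ 2)
  have hp3 : 1 < q ^ 3 := Nat.one_lt_pow (by norm_num) (by omega)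
  have hp4 : 1 < q ^ 4 := Nat.one_lt_pow (by norm_num) (by omega)
  let P : Polynomial K := .C a4 * .X ^ (q ^ 4) - .X ^ (q ^ 3) + .C (1 / a21) * .X + .C c
  have hP0 : P.coeff 0 = c := by
    simp [P, Polynomial.coeff_X_pow, (zero_lt_one.trans hp3).ne, (zero_lt_one.trans hp4).ne]
  have hP1 : P.coeff 1 = a21⁻¹ := by
    simp [P, Polynomial.coeff_X_pow, Polynomial.coeff_C, hp3.ne, hp4.ne]
  obtain ⟨y, hy, hyt⟩ := exists_root_le_ord v t P (by rw [hP1]; exact inv_ne_zero hne)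
    (by rw [hP0, hP1, hinv, ← WithTop.coe_add]; exact hc)
  refine ⟨y, ?_, hyt⟩
  simp only [P, Polynomial.eval_add, Polynomial.eval_sub, Polynomial.eval_mul, Polynomial.eval_C,
    Polynomial.eval_pow, Polynomial.eval_X] at hy
  rw [hcdef] at hy
  linear_combination hy
end
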